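/- arXiv:1504.01225 — 2 statements merged into one kernel-verified Lean document; each statement's English description precedes it below -/
import Mathlib

section
/- Assume in addition that q⁴ ≠ 1. Then the operator 𝓡 satisfies the cubic relation (𝓡 − q^{-2}·id) ∘ (𝓡 − q^{2}·id) ∘ (𝓡 + id) = 0 on (V₁⊗V₂) ⊗ (V₁⊗V₂). -/
noncomputable section

/-- The matrix (in the standard basis of `W ⊗ W`, `W` having basis `u_1, …, u_N` indexed by
`Fin N` with parity `0` for the first `t` indices and `1` for the rest) of the braiding `Ř`
of the vector representation of `U_q(gl(t|N−t))`. -/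
def Rmat (F : Type*) [Field F] (q : F) (t N : ℕ) :
    Matrix (Fin N × Fin N) (Fin N × Fin N) F :=
  Matrix.of fun out inp =>
    if inp.1 = inp.2 then
      (if (inp.1 : ℕ) < t then q⁻¹ else -q) * (if out = inp then 1 else 0)
    else
      (if t ≤ (inp.1 : ℕ) ∧ t ≤ (inp.2 : ℕ) then (-1 : F) else 1) *
          (if out = (inp.2, inp.1) then 1 else 0) +
        (if inp.2 < inp.1 then (q⁻¹ - q) * (if out = inp then 1 else 0) else 0)

/-- The sign `(−1)^{|a|·|b|}` for an index `a` of `V₁` (parity `1` iff `m ≤ a`) and an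
index `b` of `V₂` (parity `1` iff `k ≤ b`). -/
def sgn12 (F : Type*) [Field F] (m k : ℕ) {N₁ N₂ : ℕ} (a : Fin N₁) (b : Fin N₂) : F :=
  if m ≤ (a : ℕ) ∧ k ≤ (b : ℕ) then -1 else 1

/-- The matrix of the operator `𝓡 = σ₂₃ ∘ (Ř₁ ⊗ Ř₂) ∘ σ₂₃⁻¹` on `(V₁⊗V₂) ⊗ (V₁⊗V₂)`,
where `V₁ = ℂ_q^{m|n}` has dimension `N₁ = m+n`, `V₂ = ℂ_q^{k|l}` has dimension
`N₂ = k+l`, and `σ₂₃(x_a ⊗ x_{a'} ⊗ y_b ⊗ y_{b'}) = (−1)^{|a'||b|}·x_a ⊗ y_b ⊗ x_{a'} ⊗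
y_{b'}` is the superpermutation of the middle factors.  Basis vectors of
`(V₁⊗V₂) ⊗ (V₁⊗V₂)` are indexed by `((a,b),(a',b'))`. -/
def Rcal (F : Type*) [Field F] (q : F) (m N₁ k N₂ : ℕ) :
    Matrix ((Fin N₁ × Fin N₂) × (Fin N₁ × Fin N₂)) ((Fin N₁ × Fin N₂) × (Fin N₁ × Fin N₂))
      F :=
  Matrix.of fun out inp =>
    sgn12 F m k inp.2.1 inp.1.2 * sgn12 F m k out.2.1 out.1.2 *
      (Rmat F q m N₁ (out.1.1, out.2.1) (inp.1.1, inp.2.1) *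
        Rmat F q k N₂ (out.1.2, out.2.2) (inp.1.2, inp.2.2))

/-! If `a` and `b` commute and are both annihilated by `(X - α)(X - β)`, then `a` acts as `β` on
the image of `a - α`, so there `(ab - αβ)(ab - β²)` equals `β²(b - α)(b - β) = 0`. The same holds
on the image of `b - α`, and `ab - α² = b(a - α) + α(b - α)`; hence `ab` is annihilated by
`(X - α²)(X - β²)(X - αβ)`. Both braidings `Ř` satisfy the Hecke relation
`(Ř - q⁻¹)(Ř + q) = 0`, and `𝓡` is conjugate by `σ₂₃` to the product of the commuting operators
`Ř₁ ⊗ 1` and `1 ⊗ Ř₂`. -/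

open Matrix
open scoped Kronecker TensorProduct

section Algebra

variable {R S T : Type*} [CommRing R] [Ring S] [Algebra R S] [Ring T] [Algebra R T] {α β : R}

theorem commute_sub_smul_one {a b : S} (hab : Commute a b) (α β : R) :
    Commute (a - α • 1) (b - β • 1) :=
  (hab.sub_right ((Commute.one_right a).smul_right β)).sub_left
    ((Commute.one_left _).smul_left α)

theorem sub_smul_one_mul_mul_eq_zero {a b : S} (hab : Commute a b)
    (ha : (a - α • 1) * (a - β • 1) = 0) (hb : (b - α • 1) * (b - β • 1) = 0) :
    (a - α • 1) * ((a * b - β ^ 2 • 1) * (a * b - (α * β) • 1)) = 0 := by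
  have mul_a : (a - α • 1) * a = β • (a - α • 1) := by
    simpa only [mul_sub, mul_smul_comm, mul_one, sub_eq_zero] using ha
  have replace_a (c : R) :
      (a - α • 1) * (a * b - (β * c) • 1) = β • ((a - α • 1) * (b - c • 1)) := by
    rw [mul_sub, ← mul_assoc, mul_a, mul_smul_comm, mul_sub, mul_smul_comm, smul_mul_assoc,
      smul_sub, smul_smul]
  calc (a - α • 1) * ((a * b - β ^ 2 • 1) * (a * b - (α * β) • 1))
      = β • ((b - β • 1) * ((a - α • 1) * (a * b - (β * α) • 1))) := by
        rw [← mul_assoc, sq, replace_a, smul_mul_assoc, (commute_sub_smul_one hab α β).eq,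
          mul_assoc, mul_comm α]
    _ = (β * β) • ((b - β • 1) * (a - α • 1) * (b - α • 1)) := by
        rw [replace_a, mul_smul_comm, smul_smul, mul_assoc]
    _ = (β * β) • ((a - α • 1) * ((b - α • 1) * (b - β • 1))) := by
        rw [← (commute_sub_smul_one hab α β).eq, mul_assoc,
          (commute_sub_smul_one (.refl b) β α).eq]
    _ = 0 := by rw [hb, mul_zero, smul_zero]

theorem mul_cubic_eq_zero_of_quadratic {a b : S} (hab : Commute a b)
    (ha : (a - α • 1) * (a - β • 1) = 0) (hb : (b - α • 1) * (b - β • 1) = 0) :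
    (a * b - α ^ 2 • 1) * ((a * b - β ^ 2 • 1) * (a * b - (α * β) • 1)) = 0 := by
  have split : a * b - α ^ 2 • 1 = b * (a - α • 1) + α • (b - α • 1) := by
    rw [mul_sub, ← hab.eq, mul_smul_comm, mul_one, smul_sub, smul_smul, sq, sub_add_sub_cancel]
  have hb_mul := sub_smul_one_mul_mul_eq_zero hab.symm hb ha
  rw [← hab.eq] at hb_mul
  rw [split, add_mul, mul_assoc, sub_smul_one_mul_mul_eq_zero hab ha hb, mul_zero,
    smul_mul_assoc, hb_mul, smul_zero, add_zero]

theorem tmul_cubic_eq_zero_of_quadratic {a : S} {b : T}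
    (ha : (a - α • 1) * (a - β • 1) = 0) (hb : (b - α • 1) * (b - β • 1) = 0) :
    (a ⊗ₜ[R] b - α ^ 2 • 1) * ((a ⊗ₜ[R] b - β ^ 2 • 1) * (a ⊗ₜ[R] b - (α * β) • 1)) = 0 := by
  have hab : Commute (a ⊗ₜ[R] (1 : T)) ((1 : S) ⊗ₜ[R] b) := by
    simp [Commute, SemiconjBy]
  have ha' := congrArg (Algebra.TensorProduct.includeLeft (R := R) (S := R) (B := T)) ha
  have hb' := congrArg (Algebra.TensorProduct.includeRight (R := R) (A := S)) hb
  simp only [map_mul, map_sub, map_smul, map_one, map_zero,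
    Algebra.TensorProduct.includeLeft_apply,
    Algebra.TensorProduct.includeRight_apply] at ha' hb'
  simpa only [Algebra.TensorProduct.tmul_mul_tmul, mul_one, one_mul] using
    mul_cubic_eq_zero_of_quadratic hab ha' hb'

theorem kronecker_cubic_eq_zero_of_quadratic {ι κ : Type*} [Fintype ι] [Fintype κ]
    [DecidableEq ι] [DecidableEq κ] {A : Matrix ι ι R} {B : Matrix κ κ R}
    (hA : (A - α • 1) * (A - β • 1) = 0) (hB : (B - α • 1) * (B - β • 1) = 0) :
    (A ⊗ₖ B - α ^ 2 • 1) * ((A ⊗ₖ B - β ^ 2 • 1) * (A ⊗ₖ B - (α * β) • 1)) = 0 := by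
  let φ : Matrix ι ι R ⊗[R] Matrix κ κ R →ₐ[R] Matrix (ι × κ) (ι × κ) R :=
    (Algebra.TensorProduct.lid R R).toAlgHom.mapMatrix.comp
      (kroneckerTMulAlgEquiv ι κ R R R R).toAlgHom
  have φ_tmul : φ (A ⊗ₜ B) = A ⊗ₖ B := by
    ext
    simp [φ, kroneckerTMulAlgEquiv_apply]
  simpa only [map_mul, map_sub, map_smul, map_one, map_zero, φ_tmul] using
    congrArg φ (tmul_cubic_eq_zero_of_quadratic hA hB)

end Algebra

section Sign

variable {F : Type*} [Field F]

theorem sgn12_mul_self (m k : ℕ) {N₁ N₂ : ℕ} (a : Fin N₁) (b : Fin N₂) :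
    sgn12 F m k a b * sgn12 F m k a b = 1 := by
  unfold sgn12
  split_ifs <;> simp

theorem sgn12_comm (m k : ℕ) {N₁ N₂ : ℕ} (a : Fin N₁) (b : Fin N₂) :
    sgn12 F m k a b = sgn12 F k m b a := by
  simp only [sgn12, and_comm]

end Sign

section HeckeRelation

variable {F : Type*} [Field F] (q : F) (t : ℕ) {N : ℕ}

theorem Rmat_mulVec_single_self (a : Fin N) :
    Rmat F q t N *ᵥ Pi.single (a, a) 1 =
      (if (a : ℕ) < t then q⁻¹ else -q) • Pi.single (a, a) 1 := by
  ext x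
  simp [Rmat, Pi.single_apply]

theorem Rmat_mulVec_single_of_lt {a b : Fin N} (h : a < b) :
    Rmat F q t N *ᵥ Pi.single (a, b) 1 = sgn12 F t t a b • Pi.single (b, a) 1 := by
  ext x
  simp [Rmat, sgn12, Pi.single_apply, h.ne, h.not_gt]

theorem Rmat_mulVec_single_of_gt {a b : Fin N} (h : b < a) :
    Rmat F q t N *ᵥ Pi.single (a, b) 1 =
      sgn12 F t t a b • Pi.single (b, a) 1 + (q⁻¹ - q) • Pi.single (a, b) 1 := by
  ext x
  simp only [mulVec_single_one, col_apply, Rmat, of_apply, sgn12, h.ne', h, Pi.single_apply,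
    Pi.add_apply, Pi.smul_apply, smul_eq_mul, if_true, if_false]

variable {q}

theorem Rmat_mul_self (hq : q ≠ 0) :
    Rmat F q t N * Rmat F q t N = (q⁻¹ - q) • Rmat F q t N + 1 := by
  refine ext_of_mulVec_single fun ⟨a, b⟩ => ?_
  rw [← mulVec_mulVec, add_mulVec, smul_mulVec, one_mulVec]
  rcases lt_trichotomy a b with h | rfl | h
  · rw [Rmat_mulVec_single_of_lt q t h, mulVec_smul, Rmat_mulVec_single_of_gt q t h, smul_add,
      smul_smul, sgn12_comm t t b a, sgn12_mul_self, one_smul, smul_comm, add_comm]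
  · rw [Rmat_mulVec_single_self, mulVec_smul, Rmat_mulVec_single_self]
    split_ifs <;> match_scalars <;> field_simp <;> ring
  · rw [Rmat_mulVec_single_of_gt q t h, mulVec_add, mulVec_smul, mulVec_smul,
      Rmat_mulVec_single_of_lt q t h, Rmat_mulVec_single_of_gt q t h, smul_smul,
      sgn12_comm t t b a, sgn12_mul_self, one_smul, add_comm]

theorem Rmat_hecke_relation (hq : q ≠ 0) :
    (Rmat F q t N - q⁻¹ • 1) * (Rmat F q t N - (-q) • 1) = 0 := by
  simp only [sub_mul, mul_sub, Rmat_mul_self t hq, smul_mul_assoc, mul_smul_comm, one_mul, mul_one]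
  match_scalars <;> field_simp <;> ring

end HeckeRelation

/-- The superpermutation `σ₂₃` in coordinates: a tensor is its family of coefficients, and
`Equiv.prodProdProdComm` regroups the index `((a, b), (a', b'))` as `((a, a'), (b, b'))`.
Conjugating by it turns the Kronecker product of the two braidings into `𝓡`. -/
def superSwap (F : Type*) [Field F] (m N₁ k N₂ : ℕ) :
    ((Fin N₁ × Fin N₁) × (Fin N₂ × Fin N₂) → F) ≃ₗ[F]
      ((Fin N₁ × Fin N₂) × (Fin N₁ × Fin N₂) → F) :=
  LinearEquiv.funCongrLeft F F (Equiv.prodProdProdComm _ _ _ _) ≪≫ₗ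
    LinearEquiv.piCongrRight fun x =>
      LinearEquiv.smulOfUnit ⟨sgn12 F m k x.2.1 x.1.2, sgn12 F m k x.2.1 x.1.2,
        sgn12_mul_self m k _ _, sgn12_mul_self m k _ _⟩

theorem superSwap_apply {F : Type*} [Field F] {m N₁ k N₂ : ℕ}
    (v : (Fin N₁ × Fin N₁) × (Fin N₂ × Fin N₂) → F) (x : (Fin N₁ × Fin N₂) × (Fin N₁ × Fin N₂)) :
    superSwap F m N₁ k N₂ v x =
      sgn12 F m k x.2.1 x.1.2 * v (Equiv.prodProdProdComm _ _ _ _ x) :=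
  rfl

theorem Rcal_mulVec_superSwap {F : Type*} [Field F] (q : F) (m N₁ k N₂ : ℕ)
    (v : (Fin N₁ × Fin N₁) × (Fin N₂ × Fin N₂) → F) :
    Rcal F q m N₁ k N₂ *ᵥ superSwap F m N₁ k N₂ v =
      superSwap F m N₁ k N₂ ((Rmat F q m N₁ ⊗ₖ Rmat F q k N₂) *ᵥ v) := by
  ext x
  let e := Equiv.prodProdProdComm (Fin N₁) (Fin N₂) (Fin N₁) (Fin N₂)
  have Rcal_mul_superSwap (y : (Fin N₁ × Fin N₂) × (Fin N₁ × Fin N₂)) :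
      Rcal F q m N₁ k N₂ x y * superSwap F m N₁ k N₂ v y =
        sgn12 F m k x.2.1 x.1.2 *
          ((Rmat F q m N₁ ⊗ₖ Rmat F q k N₂) (e x) (e y) * v (e y)) := by
    simp only [superSwap_apply, Rcal, of_apply, kronecker_apply, e, Equiv.prodProdProdComm_apply]
    linear_combination sgn12 F m k x.2.1 x.1.2 *
      (Rmat F q m N₁ (x.1.1, x.2.1) (y.1.1, y.2.1) * Rmat F q k N₂ (x.1.2, x.2.2) (y.1.2, y.2.2) *
        v ((y.1.1, y.2.1), (y.1.2, y.2.2))) * sgn12_mul_self (F := F) m k y.2.1 y.1.2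
  simp only [superSwap_apply, mulVec, dotProduct, Finset.mul_sum]
  exact Fintype.sum_equiv e _ _ Rcal_mul_superSwap

theorem conjAlgEquiv_superSwap_kronecker {F : Type*} [Field F] (q : F) (m N₁ k N₂ : ℕ) :
    (superSwap F m N₁ k N₂).conjAlgEquiv F (toLin' (Rmat F q m N₁ ⊗ₖ Rmat F q k N₂)) =
      toLin' (Rcal F q m N₁ k N₂) := by
  rw [LinearEquiv.conjAlgEquiv_apply, ← LinearMap.comp_assoc, eq_comm,
    LinearEquiv.eq_comp_toLinearMap_symm]
  exact LinearMap.ext (Rcal_mulVec_superSwap q m N₁ k N₂)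

theorem stmt9_general (F : Type*) [Field F] (q : F) (hq : q ≠ 0) (m N₁ k N₂ : ℕ) :
    (toLin' (Rcal F q m N₁ k N₂) - (q⁻¹) ^ 2 • LinearMap.id) ∘ₗ
        (toLin' (Rcal F q m N₁ k N₂) - q ^ 2 • LinearMap.id) ∘ₗ
        (toLin' (Rcal F q m N₁ k N₂) + LinearMap.id) = 0 := by
  let Φ := toLinAlgEquiv'.trans ((superSwap F m N₁ k N₂).conjAlgEquiv F)
  have Φ_kronecker : Φ (Rmat F q m N₁ ⊗ₖ Rmat F q k N₂) = toLin' (Rcal F q m N₁ k N₂) :=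
    conjAlgEquiv_superSwap_kronecker q m N₁ k N₂
  have cubic := congrArg Φ
    (kronecker_cubic_eq_zero_of_quadratic (Rmat_hecke_relation (N := N₁) m hq)
      (Rmat_hecke_relation (N := N₂) k hq))
  rw [neg_sq, mul_neg, inv_mul_cancel₀ hq, neg_one_smul, sub_neg_eq_add] at cubic
  simp only [map_mul, map_sub, map_add, map_smul, map_one, map_zero, Φ_kronecker] at cubic
  exact cubic

/-- Assuming `q⁴ ≠ 1`, the operator `𝓡` satisfies the cubic relation
`(𝓡 − q^{-2}·id) ∘ (𝓡 − q²·id) ∘ (𝓡 + id) = 0` on `(V₁⊗V₂) ⊗ (V₁⊗V₂)`. -/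
theorem stmt9 (F : Type*) [Field F] (q : F) (hq : q ≠ 0) (hq4 : q ^ 4 ≠ 1)
    (m n k l : ℕ) (hmn : 1 ≤ m + n) (hkl : 1 ≤ k + l) :
    (Matrix.toLin' (Rcal F q m (m + n) k (k + l)) - (q⁻¹) ^ 2 • LinearMap.id) ∘ₗ
        (Matrix.toLin' (Rcal F q m (m + n) k (k + l)) - q ^ 2 • LinearMap.id) ∘ₗ
        (Matrix.toLin' (Rcal F q m (m + n) k (k + l)) + LinearMap.id) = 0 :=
  stmt9_general F q hq m (m + n) k (k + l)
end
end

section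
/- For every N ≥ 0, the K-dimension of A_N equals ∑_{j=0}^{N} binom(mk+nl, N−j)·binom(ml+nk+j−1, j), where the term binom(ml+nk+j−1, j) is understood as 1 when j = 0; that is, the graded dimension of the quantum exterior algebra A coincides with the graded dimension of the classical exterior superalgebra of ℂ^{m|n} ⊗ ℂ^{k|l} (the representation ℂ_q^{m|n} ⊗ ℂ_q^{k|l} is flat). -/
noncomputable section

/-- The ground field `K = ℂ(q)`. -/
abbrev Kq : Type := RatFunc ℂ

/-- The variable `q ∈ ℂ(q)`. -/
def qv : Kq := RatFunc.X

/-- The index set of the generators `z_{ab}` (0-based: `z_{ab}` corresponds to the pair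
`(a−1, b−1)`); the index `a` has parity `1` iff `m ≤ a` and the index `b` has parity `1`
iff `k ≤ b`. -/
abbrev Idx (m n k l : ℕ) : Type := Fin (m + n) × Fin (k + l)

/-- The generator `z_{ab}` of the free algebra. -/
def zgen (m n k l : ℕ) (p : Idx m n k l) : FreeAlgebra Kq (Idx m n k l) :=
  FreeAlgebra.ι Kq p

/-- The sign `(−1)^{|a||b|}` for two indices with parity `1` iff `≥ t`. -/
def sgn (t : ℕ) {N : ℕ} (a b : Fin N) : Kq :=
  if t ≤ (a : ℕ) ∧ t ≤ (b : ℕ) then -1 else 1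

/-- The defining relators of the quantum exterior algebra
`Λ_q(ℂ_q^{m|n} ⊗ ℂ_q^{k|l})`, cf. (4.57) in the paper. -/
def relSet (m n k l : ℕ) : Set (FreeAlgebra Kq (Idx m n k l)) :=
  { r |
    (∃ a : Fin (m + n), ∃ b : Fin (k + l), ((m ≤ (a : ℕ)) ↔ (k ≤ (b : ℕ))) ∧
        r = zgen m n k l (a, b) * zgen m n k l (a, b)) ∨
    (∃ a b : Fin (m + n), ∃ c : Fin (k + l), a < b ∧ (c : ℕ) < k ∧
        r = zgen m n k l (a, c) * zgen m n k l (b, c) +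
          (sgn m a b * qv⁻¹) • (zgen m n k l (b, c) * zgen m n k l (a, c))) ∨
    (∃ a : Fin (m + n), ∃ c d : Fin (k + l), (a : ℕ) < m ∧ c < d ∧
        r = zgen m n k l (a, c) * zgen m n k l (a, d) +
          (sgn k c d * qv⁻¹) • (zgen m n k l (a, d) * zgen m n k l (a, c))) ∨
    (∃ a b : Fin (m + n), ∃ c d : Fin (k + l), a < b ∧ c < d ∧
        r = zgen m n k l (a, c) * zgen m n k l (b, d) +
          (sgn m a b * sgn k c d) • (zgen m n k l (b, d) * zgen m n k l (a, c))) ∨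
    (∃ a b : Fin (m + n), ∃ c d : Fin (k + l), b < a ∧ c < d ∧
        r = zgen m n k l (a, c) * zgen m n k l (b, d) +
          (sgn m a b * sgn k c d) • (zgen m n k l (b, d) * zgen m n k l (a, c)) -
          (sgn m a b * (qv⁻¹ - qv)) • (zgen m n k l (b, c) * zgen m n k l (a, d))) ∨
    (∃ a : Fin (m + n), ∃ c d : Fin (k + l), m ≤ (a : ℕ) ∧ c < d ∧
        r = zgen m n k l (a, c) * zgen m n k l (a, d) -
          (sgn k c d * qv) • (zgen m n k l (a, d) * zgen m n k l (a, c))) ∨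
    (∃ a b : Fin (m + n), ∃ c : Fin (k + l), a < b ∧ k ≤ (c : ℕ) ∧
        r = zgen m n k l (a, c) * zgen m n k l (b, c) -
          (sgn m a b * qv) • (zgen m n k l (b, c) * zgen m n k l (a, c))) }

/-- The relation whose `RingQuot` is the quotient of the free algebra by the two-sided
ideal generated by `relSet`. -/
def qrel (m n k l : ℕ) :
    FreeAlgebra Kq (Idx m n k l) → FreeAlgebra Kq (Idx m n k l) → Prop :=
  fun x y => x ∈ relSet m n k l ∧ y = 0

/-- The quantum exterior algebra `A = Λ_q(ℂ_q^{m|n} ⊗ ℂ_q^{k|l})`. -/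
abbrev QExt (m n k l : ℕ) : Type := RingQuot (qrel m n k l)

/-- The quotient map from the free algebra onto `A`. -/
def qmk (m n k l : ℕ) : FreeAlgebra Kq (Idx m n k l) →ₐ[Kq] QExt m n k l :=
  RingQuot.mkAlgHom Kq (qrel m n k l)

/-- The image in `A` of the ordered monomial `z_{a₁b₁}·z_{a₂b₂}⋯z_{a_N b_N}` determined by
`f : Fin N → Idx`. -/
def qmonomial (m n k l N : ℕ) (f : Fin N → Idx m n k l) : QExt m n k l :=
  (List.ofFn fun i => qmk m n k l (zgen m n k l (f i))).prod

/-- The degree-`N` piece `A_N` of `A`: the span of the images of all products of exactly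
`N` generators. -/
def qdeg (m n k l N : ℕ) : Submodule Kq (QExt m n k l) :=
  Submodule.span Kq { x | ∃ f : Fin N → Idx m n k l, x = qmonomial m n k l N f }

/-!
Let `z_c` denote the column of the generators `z_{ac}`. The relations of `A` say exactly that
`z_d z_c = λ_{cd} Ř (z_c z_d)` for all `c ≤ d`, where `Ř` is a Hecke operator satisfying the braid
relation `Ř₁₂ Ř₂₃ Ř₁₂ = Ř₂₃ Ř₁₂ Ř₂₃`.

Hence sorting the columns, and then the letters within each column, shows that the ordered monomials
span; in a column the letters `q`-commute, and those with `(a, c)` even square to zero. For their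
independence, let `B` be the algebra generated by the first column. The braid relation allows the
operators of the remaining columns on a module `M` to be extended to `B ⊗ M` by the exchange
relations, so a module on which the ordered monomials act independently is built column by column.
The ordered monomials are finally counted by `(1 + X) ^ (mk + nl) * (1 - X)⁻¹ ^ (ml + nk)`.
-/

/-! ### Hecke symmetries -/

/-- The structure constants of a Hecke operator `Ř` on `V ⊗ V`, where `V` has a basis indexed by
a linear order `R`; the operator itself is `HeckeSymmetry.braiding`. The two conditions say that
`Ř² = h Ř + 1`. -/
structure HeckeSymmetry (K R : Type*) [CommRing K] where
  h : K
  coeff : R → R → K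
  coeff_mul_coeff : ∀ a b, a ≠ b → coeff a b * coeff b a = 1
  coeff_self_sq : ∀ a, coeff a a ^ 2 = h * coeff a a + 1

namespace HeckeSymmetry

section Braiding

variable {K R V W : Type*} [CommRing K] [LinearOrder R] [AddCommMonoid V] [Module K V]
  [AddCommMonoid W] [Module K W] (D : HeckeSymmetry K R)

/-- The operator `Ř`, acting on two-index arrays with entries in an arbitrary module. -/
def braiding (M : R → R → V) (a b : R) : V :=
  D.coeff a b • M b a + if a < b then D.h • M a b else 0

/-- The operator `Ř₁₂ = Ř ⊗ 1` on three-index arrays. -/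
def braidLeft (T : R → R → R → V) (a b c : R) : V :=
  D.braiding (fun x y => T x y c) a b

/-- The operator `Ř₂₃ = 1 ⊗ Ř` on three-index arrays. -/
def braidRight (T : R → R → R → V) (a b c : R) : V :=
  D.braiding (T a) b c

theorem braiding_of_lt (M : R → R → V) {a b : R} (hab : a < b) :
    D.braiding M a b = D.coeff a b • M b a + D.h • M a b := by
  simp only [braiding, if_pos hab]

theorem braiding_of_gt (M : R → R → V) {a b : R} (hab : b < a) :
    D.braiding M a b = D.coeff a b • M b a := by
  simp only [braiding, if_neg hab.asymm, add_zero]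

theorem braiding_self (M : R → R → V) (a : R) : D.braiding M a a = D.coeff a a • M a a := by
  simp only [braiding, lt_irrefl, if_false, add_zero]

theorem map_braiding (φ : V →ₗ[K] W) (M : R → R → V) (a b : R) :
    φ (D.braiding M a b) = D.braiding (fun x y => φ (M x y)) a b := by
  simp only [braiding, map_add, map_smul, apply_ite φ, map_zero]

theorem braiding_apply (M : R → R → V →ₗ[K] W) (a b : R) (v : V) :
    D.braiding M a b v = D.braiding (fun x y => M x y v) a b :=
  D.map_braiding (LinearMap.applyₗ v) M a b

theorem braiding_smul (t : K) (M : R → R → V) (a b : R) :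
    D.braiding (fun x y => t • M x y) a b = t • D.braiding M a b :=
  (D.map_braiding (LinearMap.lsmul K V t) M a b).symm

theorem braidLeft_smul (t : K) (T : R → R → R → V) : D.braidLeft (t • T) = t • D.braidLeft T :=
  funext₃ fun a b c => D.braiding_smul t (fun x y => T x y c) a b

theorem braidRight_smul (t : K) (T : R → R → R → V) : D.braidRight (t • T) = t • D.braidRight T :=
  funext₃ fun a b c => D.braiding_smul t (T a) b c

theorem braid_relation (T : R → R → R → V) :
    D.braidLeft (D.braidRight (D.braidLeft T)) = D.braidRight (D.braidLeft (D.braidRight T)) := by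
  funext a b c
  have hecke := D.coeff_self_sq
  have inv : ∀ a b, a < b → D.coeff a b * D.coeff b a = 1 := fun a b h =>
    D.coeff_mul_coeff a b h.ne
  simp only [braidLeft, braidRight, braiding]
  -- In each ordering of `a`, `b`, `c` the coefficients agree modulo `inv` and `hecke`.
  obtain hab | hab | hab := lt_trichotomy a b <;> obtain hbc | hbc | hbc := lt_trichotomy b c <;>
    obtain hac | hac | hac := lt_trichotomy a c <;> try order
  all_goals try subst hab
  all_goals try subst hbc
  all_goals try subst hac
  all_goals simp only [*, lt_irrefl, not_lt_of_gt, if_true, if_false, smul_add, smul_smul, add_zero]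
  all_goals match_scalars <;> grind

end Braiding

section Exchange

variable {K R C C' : Type*} [LinearOrder R]

/-- The families `X` and `Y` satisfy the exchange relations `Y X = lam Ř (X Y)`. -/
def Exchanges [CommRing K] [Semiring C] [Algebra K C] (D : HeckeSymmetry K R) (lam : K)
    (X Y : R → C) : Prop :=
  ∀ a b, Y a * X b = lam • D.braiding (fun x y => X x * Y y) a b

theorem Exchanges.map [CommRing K] [Semiring C] [Algebra K C] [Semiring C'] [Algebra K C']
    {D : HeckeSymmetry K R} {lam : K} {X Y : R → C} (h : D.Exchanges lam X Y) (φ : C →ₐ[K] C') :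
    D.Exchanges lam (fun a => φ (X a)) (fun a => φ (Y a)) := fun a b => by
  have hφ := D.map_braiding φ.toLinearMap (fun x y => X x * Y y) a b
  simp only [AlgHom.toLinearMap_apply, map_mul] at hφ
  rw [← map_mul, h a b, map_smul, hφ]

theorem exchanges_iff_apply [CommRing K] {M : Type*} [AddCommMonoid M] [Module K M]
    {D : HeckeSymmetry K R} {lam : K} {X Y : R → Module.End K M} :
    D.Exchanges lam X Y ↔
      ∀ v a b, Y a (X b v) = lam • D.braiding (fun x y => X x (Y y v)) a b := by
  simp only [Exchanges, LinearMap.ext_iff, LinearMap.smul_apply, braiding_apply,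
    Module.End.mul_apply]
  exact ⟨fun h v a b => h a b v, fun h a b v => h v a b⟩

theorem exchanges_iff [CommRing K] [Semiring C] [Algebra K C] {D : HeckeSymmetry K R} {lam : K}
    {X Y : R → C} :
    D.Exchanges lam X Y ↔
      (∀ a, Y a * X a = (lam * D.coeff a a) • (X a * Y a)) ∧
      (∀ a b, a < b → Y b * X a = (lam * D.coeff b a) • (X a * Y b)) ∧
      ∀ a b, a < b → Y a * X b = lam • (D.coeff a b • (X b * Y a) + D.h • (X a * Y b)) := by
  refine ⟨fun h => ⟨fun a => ?_, fun a b hab => ?_, fun a b hab => ?_⟩,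
    fun ⟨hself, hgt, hlt⟩ a b => ?_⟩
  · rw [h, D.braiding_self, smul_smul]
  · rw [h, D.braiding_of_gt _ hab, smul_smul]
  · rw [h, D.braiding_of_lt _ hab]
  · obtain hab | rfl | hab := lt_trichotomy a b
    · rw [hlt a b hab, D.braiding_of_lt _ hab]
    · rw [hself, D.braiding_self, smul_smul]
    · rw [hgt b a hab, D.braiding_of_gt _ hab, smul_smul]

variable [Field K] [Ring C] [Algebra K C] {D : HeckeSymmetry K R} {lam : K}

/-- The hypothesis `hlam` says that `lam⁻¹` is one of the two eigenvalues of `Ř`. -/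
theorem exchanges_self_iff (hlam : lam ^ 2 + D.h * lam = 1) {X : R → C} :
    D.Exchanges lam X X ↔
      (∀ a b, a < b → X b * X a = (lam * D.coeff b a) • (X a * X b)) ∧
        ∀ a, lam * D.coeff a a ≠ 1 → X a * X a = 0 := by
  have hself (a : R) : X a * X a = (lam * D.coeff a a) • (X a * X a) ↔
      (lam * D.coeff a a ≠ 1 → X a * X a = 0) := by
    have hfix : (1 - lam * D.coeff a a) • (X a * X a) = 0 ↔
        X a * X a = (lam * D.coeff a a) • (X a * X a) := by rw [sub_smul, one_smul, sub_eq_zero]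
    rw [← hfix, smul_eq_zero, sub_eq_zero, or_iff_not_imp_left, eq_comm (a := 1)]
  have hlt (hcomm : ∀ a b, a < b → X b * X a = (lam * D.coeff b a) • (X a * X b)) (a b : R)
      (hab : a < b) : X a * X b = lam • (D.coeff a b • (X b * X a) + D.h • (X a * X b)) := by
    have hinv := D.coeff_mul_coeff a b hab.ne
    rw [hcomm a b hab]
    match_scalars
    linear_combination -hlam - lam ^ 2 * hinv
  simp only [exchanges_iff, hself]
  exact ⟨fun h => ⟨h.2.1, h.1⟩, fun h => ⟨h.2, h.1, hlt h.1⟩⟩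

end Exchange

end HeckeSymmetry

/-! ### Ordered monomials in `q`-commuting variables -/

section Monomials

/-- The exponents allowed for a variable: all of `ℕ`, or only `0` and `1` if the variable squares to
zero, as recorded by the proposition `P`. -/
abbrev Exponent (P : Prop) : Type := {n : ℕ // P → n ≤ 1}

/-- The monomial `x₀ ^ e₀ * x₁ ^ e₁ * ⋯`, in this order. -/
def orderedMonomial {C : Type*} [Monoid C] {n : ℕ} (x : Fin n → C) (e : Fin n → ℕ) : C :=
  (List.ofFn fun i => x i ^ e i).prod

variable {C C' : Type*} [Monoid C] [Monoid C'] {n : ℕ}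

theorem orderedMonomial_zero (x : Fin 0 → C) (e : Fin 0 → ℕ) : orderedMonomial x e = 1 := by
  simp only [orderedMonomial, List.ofFn_zero, List.prod_nil]

theorem orderedMonomial_succ (x : Fin (n + 1) → C) (e : Fin (n + 1) → ℕ) :
    orderedMonomial x e = x 0 ^ e 0 * orderedMonomial (Fin.tail x) (Fin.tail e) := by
  simp only [orderedMonomial, List.ofFn_succ, List.prod_cons, Fin.tail]

theorem map_orderedMonomial {F : Type*} [FunLike F C C'] [MonoidHomClass F C C'] (φ : F)
    (x : Fin n → C) (e : Fin n → ℕ) :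
    φ (orderedMonomial x e) = orderedMonomial (fun i => φ (x i)) e := by
  simp only [orderedMonomial, map_list_prod, List.map_ofFn, Function.comp_def, map_pow]

theorem semiconj_prod_ofFn {K M N : Type*} [Semiring K] [AddCommMonoid M] [Module K M]
    [AddCommMonoid N] [Module K N] {φ : M → N} {X : Fin n → Module.End K M}
    {Y : Fin n → Module.End K N} (h : ∀ i, Function.Semiconj φ (X i) (Y i)) :
    Function.Semiconj φ (List.ofFn X).prod (List.ofFn Y).prod := by
  induction n with
  | zero => exact Function.Semiconj.id_right
  | succ n ih =>
    simp only [List.ofFn_succ, List.prod_cons, Module.End.coe_mul]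
    exact (h 0).comp_right (ih fun i => h i.succ)

theorem semiconj_orderedMonomial {K M N : Type*} [Semiring K] [AddCommMonoid M] [Module K M]
    [AddCommMonoid N] [Module K N] {φ : M → N} {X : Fin n → Module.End K M}
    {Y : Fin n → Module.End K N} (h : ∀ i, Function.Semiconj φ (X i) (Y i)) (e : Fin n → ℕ) :
    Function.Semiconj φ ⇑(orderedMonomial X e) ⇑(orderedMonomial Y e) :=
  semiconj_prod_ofFn fun i => by
    simpa only [Module.End.coe_pow] using (h i).iterate_right (e i)

end Monomials

open scoped TensorProduct in
theorem linearIndependent_tmul_tail {K V W : Type*} [CommRing K] [AddCommGroup V] [Module K V]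
    [Module.Flat K V] [AddCommGroup W] [Module K W] {n : ℕ} {ι : Fin (n + 1) → Type*} {F : ι 0 → V}
    {G : (∀ i : Fin n, ι i.succ) → W} (hF : LinearIndependent K F) (hG : LinearIndependent K G) :
    LinearIndependent K fun e : ∀ i, ι i => F (e 0) ⊗ₜ[K] G (Fin.tail e) :=
  (hF.tmul_of_flat_left hG).comp (fun e : ∀ i, ι i => (e 0, Fin.tail e))
    (Fin.consEquiv ι).symm.injective

open scoped TensorProduct

universe u

section TruncatedShift

variable {K : Type*} [CommSemiring K]

/-- The monomial `x ^ 0` in the span of the allowed powers of a variable `x`. -/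
def unitPower (P : Prop) : Exponent P →₀ K :=
  Finsupp.single ⟨0, fun _ => Nat.zero_le 1⟩ 1

/-- Multiplication by `x` on the span of the allowed powers of a variable `x`. -/
def truncatedShift (P : Prop) : Module.End K (Exponent P →₀ K) :=
  open Classical in
  Finsupp.linearCombination K fun n =>
    if h : P → n.1 + 1 ≤ 1 then Finsupp.single ⟨n.1 + 1, h⟩ 1 else 0

/-- The substitution `x ↦ t x` on the span of the allowed powers of a variable `x`. -/
def dilation (P : Prop) (t : K) : Module.End K (Exponent P →₀ K) :=
  Finsupp.linearCombination K fun n => Finsupp.single n (t ^ n.1)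

variable {P : Prop}

theorem truncatedShift_single_of_le (n : Exponent P) (h : P → n.1 + 1 ≤ 1) :
    truncatedShift P (Finsupp.single n (1 : K)) = Finsupp.single ⟨n.1 + 1, h⟩ 1 := by
  simp only [truncatedShift, Finsupp.linearCombination_single, one_smul, dif_pos h]

theorem truncatedShift_single_of_not_le (n : Exponent P) (h : ¬(P → n.1 + 1 ≤ 1)) :
    truncatedShift P (Finsupp.single n (1 : K)) = 0 := by
  simp only [truncatedShift, Finsupp.linearCombination_single, one_smul, dif_neg h]

theorem dilation_single (t : K) (n : Exponent P) :
    dilation P t (Finsupp.single n 1) = t ^ n.1 • Finsupp.single n 1 := by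
  simp only [dilation, Finsupp.linearCombination_single, one_smul, Finsupp.smul_single_one]

theorem truncatedShift_mul_self (hP : P) :
    truncatedShift P * truncatedShift P = (0 : Module.End K (Exponent P →₀ K)) := by
  ext1 n
  ext1
  simp only [LinearMap.comp_apply, Finsupp.lsingle_apply, Module.End.mul_apply,
    LinearMap.zero_apply]
  by_cases h : P → n.1 + 1 ≤ 1
  · rw [truncatedShift_single_of_le n h, truncatedShift_single_of_not_le _ (by grind)]
  · rw [truncatedShift_single_of_not_le n h, map_zero]

theorem truncatedShift_pow_unitPower (n : Exponent P) :
    (truncatedShift P ^ n.1) (unitPower P : Exponent P →₀ K) = Finsupp.single n 1 := by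
  obtain ⟨n, hn⟩ := n
  induction n with
  | zero => rfl
  | succ n ih =>
    have hn' : P → n ≤ 1 := fun h => (Nat.le_succ n).trans (hn h)
    rw [pow_succ', Module.End.mul_apply, ih hn', truncatedShift_single_of_le ⟨n, hn'⟩ hn]

theorem dilation_mul_truncatedShift (t : K) :
    dilation P t * truncatedShift P = t • (truncatedShift P * dilation P t) := by
  ext1 n
  ext1
  simp only [LinearMap.comp_apply, Finsupp.lsingle_apply, Module.End.mul_apply,
    LinearMap.smul_apply, dilation_single, map_smul]
  by_cases h : P → n.1 + 1 ≤ 1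
  · rw [truncatedShift_single_of_le n h, dilation_single, smul_smul, pow_succ']
  · rw [truncatedShift_single_of_not_le n h, map_zero, smul_zero, smul_zero]

theorem dilation_mul_comm (s t : K) :
    dilation P s * dilation P t = dilation P t * dilation P s := by
  ext1 n
  ext1
  simp only [LinearMap.comp_apply, Finsupp.lsingle_apply, Module.End.mul_apply, dilation_single,
    map_smul]
  exact smul_comm _ _ _

theorem dilation_unitPower (t : K) : dilation P t (unitPower P) = unitPower P := by
  rw [unitPower, dilation_single, pow_zero, one_smul]

end TruncatedShift

section QuantumPlane

variable {K : Type u} [Field K] {M : Type*} [AddCommGroup M] [Module K M] {n : ℕ}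

/-- The operators obtained from operators `X 0, X 1, …` by adjoining in front of them a variable
`x`, subject to the relations `X a * x = t a • x * X a` and, if `P` holds, `x * x = 0`. -/
def consVariable (P : Prop) (t : Fin n → K) (X : Fin n → Module.End K M) :
    Fin (n + 1) → Module.End K ((Exponent P →₀ K) ⊗[K] M) :=
  Fin.cons (TensorProduct.map (truncatedShift P) 1)
    fun a => TensorProduct.map (dilation P (t a)) (X a)

variable {P : Prop} {X : Fin n → Module.End K M}

theorem consVariable_qCommute {t : Fin (n + 1) → Fin (n + 1) → K}
    (hX : ∀ a b, a < b → X b * X a = t b.succ a.succ • (X a * X b)) {a b : Fin (n + 1)}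
    (hab : a < b) :
    consVariable P (fun c => t c.succ 0) X b * consVariable P (fun c => t c.succ 0) X a =
      t b a • (consVariable P (fun c => t c.succ 0) X a *
        consVariable P (fun c => t c.succ 0) X b) := by
  obtain ⟨b, rfl⟩ := Fin.exists_succ_eq.mpr (Fin.ne_zero_of_lt hab)
  cases a using Fin.cases with
  | zero =>
    simp only [consVariable, Fin.cons_zero, Fin.cons_succ, ← TensorProduct.map_mul,
      dilation_mul_truncatedShift, mul_one, one_mul, TensorProduct.map_smul_left]
  | succ a =>
    simp only [consVariable, Fin.cons_succ, ← TensorProduct.map_mul,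
      hX a b (Fin.succ_lt_succ_iff.mp hab), dilation_mul_comm (t b.succ 0),
      TensorProduct.map_smul_right]

theorem consVariable_mul_self {E : Fin (n + 1) → Prop} (t : Fin n → K)
    (hX : ∀ a : Fin n, E a.succ → X a * X a = 0) {a : Fin (n + 1)} (ha : E a) :
    consVariable (E 0) t X a * consVariable (E 0) t X a = 0 := by
  cases a using Fin.cases with
  | zero =>
    simp only [consVariable, Fin.cons_zero, ← TensorProduct.map_mul, truncatedShift_mul_self ha,
      TensorProduct.map_zero_left]
  | succ a =>
    simp only [consVariable, Fin.cons_succ, ← TensorProduct.map_mul, hX a ha,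
      TensorProduct.map_zero_right]

theorem orderedMonomial_consVariable_apply {E : Fin (n + 1) → Prop} (t : Fin n → K)
    (e : ∀ a, Exponent (E a)) (v : M) :
    orderedMonomial (consVariable (E 0) t X) (fun a => e a) (unitPower (E 0) ⊗ₜ v) =
      Finsupp.single (e 0) 1 ⊗ₜ orderedMonomial X (fun a => e a.succ) v := by
  have hunit (a : Fin n) :
      Function.Semiconj (unitPower (E 0) ⊗ₜ[K] ·) (X a) (consVariable (E 0) t X a.succ) :=
    fun m => by
      simp only [consVariable, Fin.cons_succ, TensorProduct.map_tmul, dilation_unitPower]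
  rw [orderedMonomial_succ, Module.End.mul_apply]
  refine (congrArg _ (semiconj_orderedMonomial hunit (fun a => e a.succ) v).symm).trans ?_
  simp only [consVariable, Fin.cons_zero, TensorProduct.map_pow, one_pow, TensorProduct.map_tmul,
    truncatedShift_pow_unitPower, Module.End.one_apply]

theorem exists_qCommuting_module (t : Fin n → Fin n → K) (E : Fin n → Prop) :
    ∃ (M : Type u) (_ : AddCommGroup M) (_ : Module K M) (X : Fin n → Module.End K M) (v : M),
      (∀ a b, a < b → X b * X a = t b a • (X a * X b)) ∧ (∀ a, E a → X a * X a = 0) ∧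
        LinearIndependent K fun e : ∀ a, Exponent (E a) => orderedMonomial X (fun a => e a) v := by
  induction n with
  | zero =>
    refine ⟨K, inferInstance, inferInstance, Fin.elim0, 1, fun a => a.elim0, fun a => a.elim0, ?_⟩
    simp only [orderedMonomial_zero]
    exact LinearIndependent.of_subsingleton default one_ne_zero
  | succ n ih =>
    obtain ⟨M, _, _, X, v, hcomm, hsq, hind⟩ :=
      ih (fun a b => t a.succ b.succ) (fun a => E a.succ)
    refine ⟨(Exponent (E 0) →₀ K) ⊗[K] M, inferInstance, inferInstance,
      consVariable (E 0) (fun a => t a.succ 0) X, unitPower (E 0) ⊗ₜ v,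
      fun a b => consVariable_qCommute hcomm, fun a => consVariable_mul_self _ hsq, ?_⟩
    simp only [orderedMonomial_consVariable_apply]
    exact linearIndependent_tmul_tail (ι := fun a => Exponent (E a))
      (F := fun i => Finsupp.single i (1 : K))
      (G := fun e => orderedMonomial X (fun a => e a) v)
      (Finsupp.linearIndependent_single_one K (Exponent (E 0))) hind

end QuantumPlane

/-! ### Adjoining a column -/

namespace HeckeSymmetry

open scoped TensorProduct

section Transfer

variable {K R N : Type*} [CommRing K] [LinearOrder R] [AddCommMonoid N] [Module K N]
  (D : HeckeSymmetry K R)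

/-- If `Y a` is the value at a vector `n` of an operator `Z a`, subject to the exchange relations
`Z X = mu Ř (X Z)`, then `D.transfer mu X b Y a` is the value of `Z a` at `X b n`. -/
def transfer (mu : K) (X : R → Module.End K N) (b : R) : Module.End K (R → N) where
  toFun Y a := mu • D.braiding (fun x y => X x (Y y)) a b
  map_add' Y Y' := by
    funext a
    simp only [braiding, Pi.add_apply, map_add, smul_add, ite_add_zero]
    abel
  map_smul' t Y := by
    funext a
    simp only [Pi.smul_apply, map_smul, braiding_smul, RingHom.id_apply, smul_comm mu t]

variable {D}

theorem transfer_apply (mu : K) (X : R → Module.End K N) (b : R) (Y : R → N) (a : R) :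
    D.transfer mu X b Y a = mu • D.braiding (fun x y => X x (Y y)) a b :=
  rfl

theorem Exchanges.transfer {lam : K} {X : R → Module.End K N} (hX : D.Exchanges lam X X) (mu : K) :
    D.Exchanges lam (D.transfer mu X) (D.transfer mu X) := by
  rw [exchanges_iff_apply] at hX ⊢
  intro Y b b'
  funext a
  let T : R → R → R → N := fun x y w => X x (X y (Y w))
  have hT : T = lam • D.braidLeft T := funext₃ fun x y w => hX (Y w) x y
  have htransfer (b b' : R) : D.transfer mu X b (D.transfer mu X b' Y) a =
      (mu * mu) • D.braidLeft (D.braidRight T) a b b' := by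
    simp only [transfer_apply, map_smul, map_braiding, braiding_smul, smul_smul]
    rfl
  calc D.transfer mu X b (D.transfer mu X b' Y) a
      = (mu * mu) • D.braidLeft (D.braidRight T) a b b' := htransfer b b'
    _ = (mu * mu) • lam • D.braidRight (D.braidLeft (D.braidRight T)) a b b' := by
      conv_lhs => rw [hT, braidRight_smul, braidLeft_smul, braid_relation]
      rfl
    _ = lam • D.braiding (fun x y => (mu * mu) • D.braidLeft (D.braidRight T) a x y) b b' := by
      rw [braiding_smul, smul_comm]
      rfl
    _ = lam • D.braiding (fun x y => D.transfer mu X x (D.transfer mu X y Y) a) b b' := by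
      simp only [htransfer]
    _ = (lam • D.braiding (fun x y => D.transfer mu X x (D.transfer mu X y Y)) b b') a :=
      congrArg (lam • ·) (D.map_braiding (LinearMap.proj a)
        (fun x y => D.transfer mu X x (D.transfer mu X y Y)) b b').symm

end Transfer

section ColumnAlgebra

variable {K R : Type*} [CommRing K] [LinearOrder R] (D : HeckeSymmetry K R) (lam : K)

/-- The relations `X X = lam Ř (X X)` between the generators `X` of the free algebra. -/
inductive ColumnRel : FreeAlgebra K R → FreeAlgebra K R → Prop
  | exchange (a b : R) : ColumnRel (FreeAlgebra.ι K a * FreeAlgebra.ι K b)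
      (lam • D.braiding (fun x y => FreeAlgebra.ι K x * FreeAlgebra.ι K y) a b)

/-- The algebra generated by a single column `X` of variables, with relations
`X X = lam Ř (X X)`. -/
abbrev ColumnAlgebra : Type _ :=
  RingQuot (D.ColumnRel lam)

namespace ColumnAlgebra

/-- The generators of the column algebra. -/
def gen (a : R) : D.ColumnAlgebra lam :=
  RingQuot.mkAlgHom K (D.ColumnRel lam) (FreeAlgebra.ι K a)

theorem exchanges_gen : D.Exchanges lam (gen D lam) (gen D lam) := fun a b => by
  have hrel := RingQuot.mkAlgHom_rel K (ColumnRel.exchange (D := D) (lam := lam) a b)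
  have hmap := D.map_braiding (RingQuot.mkAlgHom K (D.ColumnRel lam)).toLinearMap
    (fun x y => FreeAlgebra.ι K x * FreeAlgebra.ι K y) a b
  simp only [AlgHom.toLinearMap_apply, map_mul] at hmap
  rwa [map_mul, map_smul, hmap] at hrel

variable {D lam}

/-- The universal property of the column algebra. -/
def lift {C : Type*} [Semiring C] [Algebra K C] {X : R → C} (hX : D.Exchanges lam X X) :
    D.ColumnAlgebra lam →ₐ[K] C :=
  RingQuot.liftAlgHom K ⟨FreeAlgebra.lift K X, by
    rintro _ _ ⟨a, b⟩
    have hmap := D.map_braiding (FreeAlgebra.lift K X).toLinearMap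
      (fun x y => FreeAlgebra.ι K x * FreeAlgebra.ι K y) a b
    simp only [AlgHom.toLinearMap_apply, map_mul, FreeAlgebra.lift_ι_apply] at hmap
    rw [map_mul, map_smul, hmap, FreeAlgebra.lift_ι_apply, FreeAlgebra.lift_ι_apply, hX a b]⟩

theorem lift_gen {C : Type*} [Semiring C] [Algebra K C] {X : R → C} (hX : D.Exchanges lam X X)
    (a : R) : lift hX (gen D lam a) = X a := by
  rw [lift, gen, RingQuot.liftAlgHom_mkAlgHom_apply, FreeAlgebra.lift_ι_apply]

theorem submodule_eq_top_of_gen_mul_mem {P : Submodule K (D.ColumnAlgebra lam)} (one_mem : 1 ∈ P)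
    (gen_mul_mem : ∀ a, ∀ β ∈ P, gen D lam a * β ∈ P) : P = ⊤ := by
  have hmul (x : FreeAlgebra K R) : ∀ β ∈ P, RingQuot.mkAlgHom K (D.ColumnRel lam) x * β ∈ P := by
    induction x using FreeAlgebra.induction with
    | grade0 t =>
      intro β hβ
      rw [AlgHom.commutes, ← Algebra.smul_def]
      exact P.smul_mem t hβ
    | grade1 a => exact gen_mul_mem a
    | mul x y hx hy =>
      intro β hβ
      rw [map_mul, mul_assoc]
      exact hx _ (hy β hβ)
    | add x y hx hy =>
      intro β hβ
      rw [map_add, add_mul]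
      exact P.add_mem (hx β hβ) (hy β hβ)
  refine eq_top_iff.mpr fun β _ => ?_
  obtain ⟨x, rfl⟩ := RingQuot.mkAlgHom_surjective K (D.ColumnRel lam) β
  simpa only [mul_one] using hmul x 1 one_mem

end ColumnAlgebra

end ColumnAlgebra

section Extension

variable {K R : Type*} [CommRing K] [LinearOrder R] (D : HeckeSymmetry K R) (lam : K)
  (M : Type*) [AddCommMonoid M] [Module K M]

/-- Left multiplication by the generators of the column algebra `B` on the `B`-module `B ⊗ M`
induced from `M`. -/
def columnAction (a : R) : Module.End K (D.ColumnAlgebra lam ⊗[K] M) :=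
  TensorProduct.map (LinearMap.mulLeft K (ColumnAlgebra.gen D lam a)) 1

variable {D lam M}

theorem columnAction_tmul (a : R) (β : D.ColumnAlgebra lam) (m : M) :
    D.columnAction lam M a (β ⊗ₜ m) = (ColumnAlgebra.gen D lam a * β) ⊗ₜ m :=
  rfl

theorem exchanges_columnAction :
    D.Exchanges lam (D.columnAction lam M) (D.columnAction lam M) :=
  (ColumnAlgebra.exchanges_gen D lam).map
    ((Module.End.rTensorAlgHom K _ M).comp (Algebra.lmul K (D.ColumnAlgebra lam)))

theorem submodule_eq_top_of_columnAction_mem {P : Submodule K (D.ColumnAlgebra lam ⊗[K] M)}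
    (one_tmul_mem : ∀ m, 1 ⊗ₜ m ∈ P) (action_mem : ∀ b, ∀ v ∈ P, D.columnAction lam M b v ∈ P) :
    P = ⊤ := by
  have htmul (m : M) : P.comap ((TensorProduct.mk K _ M).flip m) = ⊤ :=
    ColumnAlgebra.submodule_eq_top_of_gen_mul_mem (one_tmul_mem m) fun b β hβ => action_mem b _ hβ
  rw [eq_top_iff, ← TensorProduct.span_tmul_eq_top, Submodule.span_le]
  rintro _ ⟨β, m, rfl⟩
  exact (htmul m).ge (Submodule.mem_top (x := β))

variable (D lam)

/-- The operators on `B ⊗ M` which restrict to `z` on `1 ⊗ M` and satisfy the exchange relations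
`z X = mu Ř (X z)` with the generators `X` of the column algebra `B`. -/
def extend (mu : K) (z : R → Module.End K M) (a : R) :
    Module.End K (D.ColumnAlgebra lam ⊗[K] M) :=
  TensorProduct.lift <|
    LinearMap.lcomp K _
        (LinearMap.pi fun c => TensorProduct.mk K (D.ColumnAlgebra lam) M 1 ∘ₗ z c) ∘ₗ
      LinearMap.compRight K (LinearMap.proj a) ∘ₗ
        (ColumnAlgebra.lift (exchanges_columnAction (D := D) (M := M).transfer mu)).toLinearMap

theorem extend_tmul (mu : K) (z : R → Module.End K M) (a : R) (β : D.ColumnAlgebra lam) (m : M) :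
    D.extend lam mu z a (β ⊗ₜ m) =
      ColumnAlgebra.lift (exchanges_columnAction.transfer mu) β (fun c => 1 ⊗ₜ z c m) a :=
  rfl

theorem extend_one_tmul (mu : K) (z : R → Module.End K M) (a : R) (m : M) :
    D.extend lam mu z a (1 ⊗ₜ m) = 1 ⊗ₜ z a m := by
  rw [extend_tmul, map_one, Module.End.one_apply]

theorem exchanges_columnAction_extend (mu : K) (z : R → Module.End K M) :
    D.Exchanges mu (D.columnAction lam M) (D.extend lam mu z) := fun a b => by
  refine TensorProduct.ext' fun β m => ?_
  simp only [LinearMap.smul_apply, braiding_apply, Module.End.mul_apply, columnAction_tmul,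
    extend_tmul, map_mul, ColumnAlgebra.lift_gen, transfer_apply]

variable {D}

theorem Exchanges.extend {nu : K} {z w : R → Module.End K M} (hzw : D.Exchanges nu z w)
    (mu mu' : K) : D.Exchanges nu (D.extend lam mu z) (D.extend lam mu' w) := by
  have hXZ := exchanges_iff_apply.mp (D.exchanges_columnAction_extend lam mu z)
  have hXW := exchanges_iff_apply.mp (D.exchanges_columnAction_extend lam mu' w)
  rw [exchanges_iff_apply] at hzw
  set X := D.columnAction lam M
  set Z := D.extend lam mu z with hZ
  set W := D.extend lam mu' w with hW
  let P : Submodule K (D.ColumnAlgebra lam ⊗[K] M) :=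
    ⨅ (a) (b), LinearMap.eqLocus (W a * Z b) (nu • D.braiding (fun x y => Z x * W y) a b)
  have mem_P (v) : v ∈ P ↔
      ∀ a b, W a (Z b v) = nu • D.braiding (fun x y => Z x (W y v)) a b := by
    simp only [P, Submodule.mem_iInf, LinearMap.mem_eqLocus, LinearMap.smul_apply, braiding_apply,
      Module.End.mul_apply]
  suffices P = ⊤ from exchanges_iff_apply.mpr fun v => (mem_P v).mp (this ▸ Submodule.mem_top)
  refine submodule_eq_top_of_columnAction_mem (fun m => ?_) fun b v hv => ?_
  · refine (mem_P _).mpr fun a b => ?_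
    simp only [hZ, hW, extend_one_tmul, hzw m a b]
    rw [← TensorProduct.mk_apply, map_smul, map_braiding]
    rfl
  · rw [mem_P] at hv ⊢
    intro c a
    -- The two ways of moving `X b` past `Z` and `W` agree by the braid relation.
    let G : R → R → R → D.ColumnAlgebra lam ⊗[K] M := fun p x y => X p (Z x (W y v))
    calc W c (Z a (X b v))
        = (mu * (mu' * nu)) • D.braidRight (D.braidLeft (D.braidRight G)) c a b := by
          simp only [hXZ, hXW, hv, map_smul, map_braiding, braiding_smul, smul_smul]
          rfl
      _ = (nu * (mu' * mu)) • D.braidLeft (D.braidRight (D.braidLeft G)) c a b := by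
          rw [braid_relation, mul_left_comm, mul_comm mu, mul_left_comm]
      _ = nu • D.braiding (fun x y => Z x (W y (X b v))) c a := by
          simp only [hXZ, hXW, map_smul, map_braiding, braiding_smul, smul_smul]
          rfl

end Extension

end HeckeSymmetry

/-- The product over the columns `c`, in increasing order, of the monomials in the variables
`z c 0, z c 1, …` of the column `c`. -/
def columnMonomial {C : Type*} [Monoid C] {p r : ℕ} (z : Fin p → Fin r → C)
    (e : Fin p → Fin r → ℕ) : C :=
  (List.ofFn fun c => orderedMonomial (z c) (e c)).prod

theorem columnMonomial_zero {C : Type*} [Monoid C] {r : ℕ} (z : Fin 0 → Fin r → C)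
    (e : Fin 0 → Fin r → ℕ) : columnMonomial z e = 1 := by
  simp only [columnMonomial, List.ofFn_zero, List.prod_nil]

theorem columnMonomial_succ {C : Type*} [Monoid C] {p r : ℕ} (z : Fin (p + 1) → Fin r → C)
    (e : Fin (p + 1) → Fin r → ℕ) :
    columnMonomial z e =
      orderedMonomial (z 0) (e 0) * columnMonomial (Fin.tail z) (Fin.tail e) := by
  simp only [columnMonomial, List.ofFn_succ, List.prod_cons, Fin.tail]

theorem map_columnMonomial {C C' : Type*} [Monoid C] [Monoid C'] {F : Type*} [FunLike F C C']
    [MonoidHomClass F C C'] {p r : ℕ} (φ : F) (z : Fin p → Fin r → C) (e : Fin p → Fin r → ℕ) :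
    φ (columnMonomial z e) = columnMonomial (fun c a => φ (z c a)) e := by
  simp only [columnMonomial, map_list_prod, List.map_ofFn, Function.comp_def, map_orderedMonomial]

theorem semiconj_columnMonomial {K M N : Type*} [Semiring K] [AddCommMonoid M] [Module K M]
    [AddCommMonoid N] [Module K N] {φ : M → N} {p r : ℕ} {z : Fin p → Fin r → Module.End K M}
    {w : Fin p → Fin r → Module.End K N} (h : ∀ c a, Function.Semiconj φ (z c a) (w c a))
    (e : Fin p → Fin r → ℕ) :
    Function.Semiconj φ ⇑(columnMonomial z e) ⇑(columnMonomial w e) :=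
  semiconj_prod_ofFn fun c => semiconj_orderedMonomial (h c) (e c)

namespace HeckeSymmetry

open scoped TensorProduct

/-- The columns `z c` satisfy all exchange relations, including those of each column with itself. -/
def ExchangeFamily {K R C : Type*} [CommRing K] [LinearOrder R] [Semiring C] [Algebra K C] {p : ℕ}
    (D : HeckeSymmetry K R) (lam : Fin p → Fin p → K) (z : Fin p → R → C) : Prop :=
  ∀ c d, c ≤ d → D.Exchanges (lam c d) (z c) (z d)

theorem exchangeFamily_iff {K R C : Type*} [CommRing K] [LinearOrder R] [Semiring C] [Algebra K C]
    {p : ℕ} {D : HeckeSymmetry K R} {lam : Fin p → Fin p → K} {z : Fin p → R → C} :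
    D.ExchangeFamily lam z ↔
      (∀ c, D.Exchanges (lam c c) (z c) (z c)) ∧
        ∀ c d, c < d → D.Exchanges (lam c d) (z c) (z d) := by
  refine ⟨fun h => ⟨fun c => h c c le_rfl, fun c d hcd => h c d hcd.le⟩, fun h c d hcd => ?_⟩
  obtain rfl | hcd := hcd.eq_or_lt
  exacts [h.1 c, h.2 c d hcd]

variable {K : Type u} [Field K] {r : ℕ}

theorem ColumnAlgebra.linearIndependent_orderedMonomial (D : HeckeSymmetry K (Fin r)) {lam : K}
    (hlam : lam ^ 2 + D.h * lam = 1) :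
    LinearIndependent K fun e : ∀ a, Exponent (lam * D.coeff a a ≠ 1) =>
      orderedMonomial (ColumnAlgebra.gen D lam) fun a => e a := by
  obtain ⟨M, _, _, X, v, hcomm, hsq, hind⟩ :=
    exists_qCommuting_module (fun b a => lam * D.coeff b a) (fun a => lam * D.coeff a a ≠ 1)
  let φ := ColumnAlgebra.lift ((exchanges_self_iff hlam).mpr ⟨hcomm, hsq⟩)
  have hφ (e : ∀ a, Exponent (lam * D.coeff a a ≠ 1)) :
      φ (orderedMonomial (gen D lam) fun a => e a) = orderedMonomial X fun a => e a := by
    simpa only [φ, lift_gen] using map_orderedMonomial φ (gen D lam) (fun a => (e a : ℕ))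
  refine LinearIndependent.of_comp (LinearMap.applyₗ v ∘ₗ φ.toLinearMap) ?_
  convert hind with e
  exact congrArg (fun f : Module.End K M => f v) (hφ e)

theorem orderedMonomial_columnAction_one_tmul {D : HeckeSymmetry K (Fin r)} {lam : K} {M : Type*}
    [AddCommMonoid M] [Module K M] (e : Fin r → ℕ) (m : M) :
    orderedMonomial (D.columnAction lam M) e (1 ⊗ₜ m) =
      orderedMonomial (ColumnAlgebra.gen D lam) e ⊗ₜ m := by
  let ψ := (Module.End.rTensorAlgHom K (D.ColumnAlgebra lam) M).comp (Algebra.lmul K _)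
  calc orderedMonomial (D.columnAction lam M) e (1 ⊗ₜ m)
      = ψ (orderedMonomial (ColumnAlgebra.gen D lam) e) (1 ⊗ₜ m) := by
        rw [map_orderedMonomial]
        rfl
    _ = (orderedMonomial (ColumnAlgebra.gen D lam) e * 1) ⊗ₜ m := rfl
    _ = orderedMonomial (ColumnAlgebra.gen D lam) e ⊗ₜ m := by rw [mul_one]

section ConsColumn

variable (D : HeckeSymmetry K (Fin r)) {M : Type*} [AddCommGroup M] [Module K M] {p : ℕ}

/-- The columns of operators on `B ⊗ M` obtained from columns of operators on `M` by adjoining in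
front of them the column of generators of the column algebra `B`. -/
def consColumn (lam : Fin (p + 1) → K) (z : Fin p → Fin r → Module.End K M) :
    Fin (p + 1) → Fin r → Module.End K (D.ColumnAlgebra (lam 0) ⊗[K] M) :=
  Fin.cons (D.columnAction (lam 0) M) fun c => D.extend (lam 0) (lam c.succ) (z c)

variable {D}

theorem ExchangeFamily.consColumn {lam : Fin (p + 1) → Fin (p + 1) → K}
    {z : Fin p → Fin r → Module.End K M}
    (hz : D.ExchangeFamily (fun c d => lam c.succ d.succ) z) :
    D.ExchangeFamily lam (D.consColumn (lam 0) z) := by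
  intro c d hcd
  cases d using Fin.cases with
  | zero =>
    obtain rfl := Fin.le_zero_iff.mp hcd
    exact exchanges_columnAction
  | succ d =>
    cases c using Fin.cases with
    | zero => exact D.exchanges_columnAction_extend _ _ _
    | succ c => exact (hz c d (Fin.succ_le_succ_iff.mp hcd)).extend _ _ _

theorem columnMonomial_consColumn_apply (lam : Fin (p + 1) → K)
    (z : Fin p → Fin r → Module.End K M) (e : Fin (p + 1) → Fin r → ℕ) (v : M) :
    columnMonomial (D.consColumn lam z) e (1 ⊗ₜ v) =
      orderedMonomial (ColumnAlgebra.gen D (lam 0)) (e 0) ⊗ₜ columnMonomial z (Fin.tail e) v := by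
  have hone (c : Fin p) (a : Fin r) :
      Function.Semiconj ((1 : D.ColumnAlgebra (lam 0)) ⊗ₜ[K] ·) (z c a)
        (D.consColumn lam z c.succ a) := fun m =>
    (D.extend_one_tmul _ _ _ _ m).symm
  rw [columnMonomial_succ, Module.End.mul_apply]
  refine (congrArg _ (semiconj_columnMonomial hone (Fin.tail e) v).symm).trans ?_
  exact orderedMonomial_columnAction_one_tmul _ _

end ConsColumn

theorem exists_exchangeFamily_linearIndependent (D : HeckeSymmetry K (Fin r)) {p : ℕ}
    (lam : Fin p → Fin p → K) (hlam : ∀ c, lam c c ^ 2 + D.h * lam c c = 1) :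
    ∃ (M : Type u) (_ : AddCommGroup M) (_ : Module K M) (z : Fin p → Fin r → Module.End K M)
      (v : M), D.ExchangeFamily lam z ∧
        LinearIndependent K fun e : ∀ c a, Exponent (lam c c * D.coeff a a ≠ 1) =>
          columnMonomial z (fun c a => e c a) v := by
  induction p with
  | zero =>
    refine ⟨K, inferInstance, inferInstance, Fin.elim0, 1, fun c => c.elim0, ?_⟩
    simp only [columnMonomial_zero]
    exact LinearIndependent.of_subsingleton default one_ne_zero
  | succ p ih =>
    obtain ⟨M, _, _, z, v, hz, hind⟩ :=
      ih (fun c d => lam c.succ d.succ) fun c => hlam c.succ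
    refine ⟨D.ColumnAlgebra (lam 0 0) ⊗[K] M, inferInstance, inferInstance,
      D.consColumn (lam 0) z, 1 ⊗ₜ v, hz.consColumn, ?_⟩
    simp only [columnMonomial_consColumn_apply]
    exact linearIndependent_tmul_tail
      (ι := fun c => ∀ a, Exponent (lam c c * D.coeff a a ≠ 1))
      (F := fun e => orderedMonomial (ColumnAlgebra.gen D (lam 0 0)) (fun a => e a))
      (G := fun e => columnMonomial z (fun c a => e c a) v)
      (ColumnAlgebra.linearIndependent_orderedMonomial D (hlam 0)) hind

end HeckeSymmetry

/-! ### Ordered monomials span -/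

section Spanning

open Submodule

variable {K C : Type*} [CommSemiring K] [Semiring C] [Algebra K C]

theorem sup_pow_le_of_mul_le {x y : Submodule K C} (h : y * x ≤ x * y) (N : ℕ) :
    (x ⊔ y) ^ N ≤ ⨆ (i) (j) (_ : i + j = N), x ^ i * y ^ j := by
  have hpow (i : ℕ) : y * x ^ i ≤ x ^ i * y := by
    induction i with
    | zero => rw [pow_zero, one_mul, mul_one]
    | succ i ih =>
      calc y * x ^ (i + 1) = y * x ^ i * x := by rw [pow_succ, mul_assoc]
        _ ≤ x ^ i * (y * x) := by grw [ih, mul_assoc]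
        _ ≤ x ^ (i + 1) * y := by grw [h, ← mul_assoc, ← pow_succ]
  induction N with
  | zero => exact le_iSup₂_of_le 0 0 (le_iSup_of_le rfl (by simp only [pow_zero, mul_one, le_refl]))
  | succ N ih =>
    rw [pow_succ']
    grw [ih]
    simp only [Submodule.mul_iSup, Submodule.sup_mul, iSup_le_iff]
    refine fun i j hij => sup_le ?_ ?_
    · exact le_iSup₂_of_le (i + 1) j
        (le_iSup_of_le (by omega) (by rw [pow_succ', mul_assoc]))
    · refine le_iSup₂_of_le i (j + 1) (le_iSup_of_le (by omega) ?_)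
      calc y * (x ^ i * y ^ j) = y * x ^ i * y ^ j := (mul_assoc _ _ _).symm
        _ ≤ x ^ i * y ^ (j + 1) := by grw [hpow, pow_succ', mul_assoc]

theorem iSup_pow_le_span_ofFn_prod {p : ℕ} {ι : Fin p → Type*} {T : Fin p → Submodule K C}
    (hT : ∀ c d, c < d → T d * T c ≤ T c * T d) (b : ∀ c, ι c → C) (deg : ∀ c, ι c → ℕ)
    (hb : ∀ c n, T c ^ n ≤ span K (b c '' {i | deg c i = n})) (N : ℕ) :
    (⨆ c, T c) ^ N ≤ span K ((fun f : ∀ c, ι c => (List.ofFn fun c => b c (f c)).prod) ''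
      {f | ∑ c, deg c (f c) = N}) := by
  induction p generalizing N with
  | zero =>
    obtain rfl | hN := eq_or_ne N 0
    · rw [pow_zero, one_eq_span]
      exact span_mono (Set.singleton_subset_iff.mpr ⟨fun c => c.elim0, rfl, List.prod_nil⟩)
    · rw [iSup_of_empty, ← zero_eq_bot, zero_pow hN]
      exact bot_le
  | succ p ih =>
    have htail : (⨆ c : Fin p, T c.succ) * T 0 ≤ T 0 * ⨆ c : Fin p, T c.succ := by
      rw [iSup_mul, mul_iSup]
      exact iSup_mono fun c => hT 0 c.succ c.succ_pos
    have hsup : ⨆ c, T c ≤ T 0 ⊔ ⨆ c : Fin p, T c.succ :=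
      iSup_le (Fin.cases le_sup_left fun c => le_sup_of_le_right (le_iSup (fun c => T c.succ) c))
    grw [hsup]
    refine (sup_pow_le_of_mul_le htail N).trans (iSup₂_le fun i j => iSup_le fun hij => ?_)
    grw [hb 0 i, ih (fun c d hcd => hT _ _ (Fin.succ_lt_succ_iff.mpr hcd)) (fun c => b c.succ)
      (fun c => deg c.succ) (fun c => hb c.succ) j, span_mul_span]
    refine span_mono ?_
    rintro _ ⟨_, ⟨i, rfl, rfl⟩, _, ⟨f, rfl, rfl⟩, rfl⟩
    exact ⟨Fin.cons i f, by simpa [Fin.sum_univ_succ] using hij,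
      by simp only [List.ofFn_succ, List.prod_cons, Fin.cons_zero, Fin.cons_succ]⟩

theorem span_singleton_pow_le {P : Prop} {x : C} (hx : P → x * x = 0) (n : ℕ) :
    (K ∙ x) ^ n ≤ span K ((fun i : Exponent P => x ^ (i : ℕ)) '' {i | (i : ℕ) = n}) := by
  rw [span_pow, Set.singleton_pow, span_singleton_le_iff_mem]
  by_cases hn : P → n ≤ 1
  · exact subset_span ⟨⟨n, hn⟩, rfl, rfl⟩
  · obtain ⟨hP, hn⟩ := Classical.not_imp.mp hn
    rw [pow_eq_zero_of_le (not_le.mp hn) ((pow_two x).trans (hx hP))]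
    exact zero_mem _

theorem ofFn_prod_mem_pow {n : ℕ} {T : Submodule K C} {y : Fin n → C} {d : Fin n → ℕ}
    (hy : ∀ i, y i ∈ T ^ d i) : (List.ofFn y).prod ∈ T ^ ∑ i, d i := by
  rw [← List.sum_ofFn]
  exact SetLike.list_prod_ofFn_mem_graded (A := fun i : ℕ => T ^ i) d y hy

theorem columnMonomial_mem_pow {p r : ℕ} {T : Submodule K C} {z : Fin p → Fin r → C}
    (hz : ∀ c a, z c a ∈ T) (e : Fin p → Fin r → ℕ) :
    columnMonomial z e ∈ T ^ ∑ c, ∑ a, e c a :=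
  ofFn_prod_mem_pow fun c => ofFn_prod_mem_pow fun a => Submodule.pow_mem_pow T (hz c a) (e c a)

end Spanning

namespace HeckeSymmetry

open Submodule

section

variable {K R C : Type*} [CommRing K] [LinearOrder R] [Semiring C] [Algebra K C]
  {D : HeckeSymmetry K R}

theorem Exchanges.span_mul_span_le {lam : K} {X Y : R → C} (h : D.Exchanges lam X Y) :
    span K (Set.range Y) * span K (Set.range X) ≤ span K (Set.range X) * span K (Set.range Y) := by
  have hmem (a b : R) : X a * Y b ∈ span K (Set.range X) * span K (Set.range Y) :=
    mul_mem_mul (mem_span_of_mem ⟨a, rfl⟩) (mem_span_of_mem ⟨b, rfl⟩)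
  rw [span_mul_span, span_le]
  rintro _ ⟨_, ⟨a, rfl⟩, _, ⟨b, rfl⟩, rfl⟩
  change Y a * X b ∈ _
  rw [h a b, braiding]
  refine smul_mem _ _ (add_mem (smul_mem _ _ (hmem b a)) ?_)
  split_ifs
  · exact smul_mem _ _ (hmem a b)
  · exact zero_mem _

end

universe w

variable {K : Type*} {C : Type w} [Field K] [Ring C] [Algebra K C] {p r : ℕ}
  {D : HeckeSymmetry K (Fin r)}

theorem Exchanges.span_pow_le {lam : K} (hlam : lam ^ 2 + D.h * lam = 1) {X : Fin r → C}
    (hX : D.Exchanges lam X X) (n : ℕ) :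
    span K (Set.range X) ^ n ≤ span K
      ((fun e : ∀ a, Exponent (lam * D.coeff a a ≠ 1) => orderedMonomial X (fun a => e a)) ''
        {e | ∑ a, (e a : ℕ) = n}) := by
  obtain ⟨hcomm, hsq⟩ := (exchanges_self_iff hlam).mp hX
  rw [span_range_eq_iSup]
  refine iSup_pow_le_span_ofFn_prod (fun a b hab => ?_) (fun a (i : Exponent _) => X a ^ (i : ℕ))
    (fun _ i => i) (fun a => span_singleton_pow_le (hsq a)) n
  simp only [span_mul_span, Set.singleton_mul_singleton, span_singleton_le_iff_mem,
    hcomm a b hab]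
  exact smul_mem _ _ (mem_span_singleton_self _)

theorem ExchangeFamily.span_pow_eq {lam : Fin p → Fin p → K}
    (hlam : ∀ c, lam c c ^ 2 + D.h * lam c c = 1) {z : Fin p → Fin r → C}
    (hz : D.ExchangeFamily lam z) (N : ℕ) :
    span K (⋃ c, Set.range (z c)) ^ N = span K
      ((fun e : ∀ c a, Exponent (lam c c * D.coeff a a ≠ 1) =>
          columnMonomial z (fun c a => e c a)) ''
        {e | ∑ c, ∑ a, (e c a : ℕ) = N}) := by
  apply le_antisymm
  · rw [span_iUnion]
    exact iSup_pow_le_span_ofFn_prod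
      (ι := fun c => ∀ a, Exponent (lam c c * D.coeff a a ≠ 1))
      (fun c d hcd => (hz c d hcd.le).span_mul_span_le)
      (fun c e => orderedMonomial (z c) (fun a => e a)) (fun c e => ∑ a, (e a : ℕ))
      (fun c => (hz c c le_rfl).span_pow_le (hlam c)) N
  · rw [span_le]
    rintro _ ⟨e, rfl, rfl⟩
    exact columnMonomial_mem_pow
      (fun c a => subset_span (Set.mem_iUnion_of_mem c (Set.mem_range_self a))) _

theorem ExchangeFamily.rank_span_pow {lam : Fin p → Fin p → K}
    (hlam : ∀ c, lam c c ^ 2 + D.h * lam c c = 1) {z : Fin p → Fin r → C}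
    (hz : D.ExchangeFamily lam z)
    (hind : LinearIndependent K fun e : ∀ c a, Exponent (lam c c * D.coeff a a ≠ 1) =>
      columnMonomial z (fun c a => e c a)) (N : ℕ) :
    Module.rank K ↥(span K (⋃ c, Set.range (z c)) ^ N) =
      Cardinal.lift.{w} (Cardinal.mk {e : ∀ c a, Exponent (lam c c * D.coeff a a ≠ 1) |
        ∑ c, ∑ a, (e c a : ℕ) = N}) := by
  rw [hz.span_pow_eq hlam, rank_span_set (hind.linearIndepOn _).id_image,
    ← Cardinal.mk_image_eq_lift _ _ hind.injective, Cardinal.lift_uzero]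

end HeckeSymmetry

/-! ### Counting exponents -/

section Counting

open Finset PowerSeries

variable {S : Type*} [CommRing S]

theorem coeff_one_add_X_pow (A j : ℕ) : coeff j ((1 + X : S⟦X⟧) ^ A) = A.choose j := by
  have hcoe : (1 + X : S⟦X⟧) ^ A = ((1 + Polynomial.X : Polynomial S) ^ A : Polynomial S) := by
    rw [Polynomial.coe_pow, Polynomial.coe_add, Polynomial.coe_one, Polynomial.coe_X]
  rw [hcoe, Polynomial.coeff_coe, Polynomial.coeff_one_add_X_pow]

theorem coeff_mk_one_pow (B j : ℕ) :
    coeff j ((PowerSeries.mk 1 : S⟦X⟧) ^ B) = (B + j - 1).choose j := by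
  cases B with
  | zero => cases j <;> simp [coeff_one]
  | succ B =>
    rw [mk_one_pow_eq_mk_choose_add, coeff_mk, Nat.choose_symm_add, Nat.add_right_comm,
      Nat.add_sub_cancel]

variable {ι κ : Type*} [Fintype ι] [Fintype κ]

theorem coeff_prod_ite_one_add_X [DecidableEq ι] (P : ι → Prop) [DecidablePred P] (N : ℕ) :
    coeff N (∏ i, if P i then 1 + X else PowerSeries.mk 1 : ℤ⟦X⟧) =
      #{e ∈ univ.finsuppAntidiag N | ∀ i, P i → e i ≤ 1} := by
  have hcoeff (i : ι) (j : ℕ) : coeff j (if P i then 1 + X else PowerSeries.mk 1 : ℤ⟦X⟧) =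
      if P i → j ≤ 1 then 1 else 0 := by
    by_cases h : P i
    · rcases j with _ | _ | j <;> simp [h, coeff_one, coeff_X]
    · simp [h]
  simp only [coeff_prod, hcoeff, prod_ite_zero, prod_const_one, mem_univ, true_imp_iff, sum_boole]

theorem mk_exponents_eq_card_filter [DecidableEq ι] (P : ι → Prop) [DecidablePred P] (N : ℕ) :
    Cardinal.mk {e : ∀ i, Exponent (P i) | ∑ i, (e i : ℕ) = N} =
      #{e ∈ univ.finsuppAntidiag N | ∀ i, P i → e i ≤ 1} := by
  rw [← Cardinal.mk_coe_finset]
  exact Cardinal.mk_congr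
    { toFun e := ⟨Finsupp.equivFunOnFinite.symm fun i => e.1 i, by
        simpa using ⟨e.2, fun i => (e.1 i).2⟩⟩
      invFun f := ⟨fun i => ⟨f.1 i, (mem_filter.mp f.2).2 i⟩, by
        simpa using (mem_filter.mp f.2).1⟩
      left_inv _ := rfl
      right_inv f := Subtype.ext (Finsupp.equivFunOnFinite.symm_apply_apply f.1) }

theorem mk_exponents_eq_sum_choose (P : ι → Prop) (N : ℕ) :
    Cardinal.mk {e : ∀ i, Exponent (P i) | ∑ i, (e i : ℕ) = N} =
      (∑ j ∈ range (N + 1),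
        (Nat.card {i // P i}).choose (N - j) * (Nat.card {i // ¬P i} + j - 1).choose j : ℕ) := by
  classical
  rw [mk_exponents_eq_card_filter, Nat.cast_inj, ← @Nat.cast_inj ℤ, ← coeff_prod_ite_one_add_X,
    prod_ite, prod_const, prod_const, mul_comm, coeff_mul,
    Nat.sum_antidiagonal_eq_sum_range_succ_mk]
  simp only [Nat.card_eq_fintype_card, Fintype.card_subtype]
  push_cast
  exact sum_congr rfl fun j _ => by rw [coeff_one_add_X_pow, coeff_mk_one_pow, mul_comm]

theorem mk_curried_exponents_eq_sum_choose (P : ι → κ → Prop) (N : ℕ) :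
    Cardinal.mk {e : ∀ i k, Exponent (P i k) | ∑ i, ∑ k, (e i k : ℕ) = N} =
      (∑ j ∈ range (N + 1), (Nat.card {x : ι × κ // P x.1 x.2}).choose (N - j) *
        (Nat.card {x : ι × κ // ¬P x.1 x.2} + j - 1).choose j : ℕ) := by
  rw [← mk_exponents_eq_sum_choose]
  exact Cardinal.mk_congr
    { toFun e := ⟨fun x => e.1 x.1 x.2, (Fintype.sum_prod_type _).trans e.2⟩
      invFun e := ⟨fun i k => e.1 (i, k), (Fintype.sum_prod_type _).symm.trans e.2⟩
      left_inv _ := rfl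
      right_inv _ := rfl }

end Counting

/-! ### The quantum exterior algebra -/

section QuantumExterior

open HeckeSymmetry Submodule

theorem qv_ne_zero : qv ≠ 0 := RatFunc.X_ne_zero

theorem sgn_comm (t : ℕ) {N : ℕ} (a b : Fin N) : sgn t a b = sgn t b a := by
  simp only [sgn, and_comm]

theorem sgn_mul_self (t : ℕ) {N : ℕ} (a b : Fin N) : sgn t a b * sgn t a b = 1 := by
  unfold sgn
  split_ifs <;> norm_num

/-- The Hecke symmetry of the quantum superspace `ℂ_q^{t|N-t}`: its operator `Ř` has eigenvalue
`q` on the squares of the even basis vectors and `-q⁻¹` on the squares of the odd ones. -/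
def superHecke (t N : ℕ) : HeckeSymmetry Kq (Fin N) where
  h := qv - qv⁻¹
  coeff a b := if a = b then if t ≤ (a : ℕ) then -qv⁻¹ else qv else sgn t a b
  coeff_mul_coeff a b hab := by
    rw [if_neg hab, if_neg hab.symm, sgn_comm t b a, sgn_mul_self]
  coeff_self_sq a := by
    have := qv_ne_zero
    simp only [if_true]
    split_ifs <;> field_simp <;> ring

theorem superHecke_h (t N : ℕ) : (superHecke t N).h = qv - qv⁻¹ := rfl

theorem superHecke_coeff_self_of_lt {t N : ℕ} {a : Fin N} (ha : (a : ℕ) < t) :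
    (superHecke t N).coeff a a = qv := by
  simp only [superHecke, if_true, if_neg ha.not_ge]

theorem superHecke_coeff_self_of_le {t N : ℕ} {a : Fin N} (ha : t ≤ (a : ℕ)) :
    (superHecke t N).coeff a a = -qv⁻¹ := by
  simp only [superHecke, if_true, if_pos ha]

theorem superHecke_coeff_of_ne (t : ℕ) {N : ℕ} {a b : Fin N} (hab : a ≠ b) :
    (superHecke t N).coeff a b = sgn t a b := by
  simp only [superHecke, if_neg hab]

theorem qv_sq_ne_neg_one : qv ^ 2 ≠ -1 := by
  intro h
  have hpoly : (Polynomial.X ^ 2 : Polynomial ℂ) = -1 :=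
    RatFunc.algebraMap_injective ℂ (by simpa [qv, ← RatFunc.algebraMap_X] using h)
  simpa using congrArg (Polynomial.eval 0) hpoly

theorem add_smul_eq_zero_iff {K C : Type*} [CommRing K] [AddCommGroup C] [Module K C] {s t : K}
    (hst : s * t = -1) {x y : C} : x + s • y = 0 ↔ y = t • x := by
  constructor
  · intro h
    rw [eq_neg_of_add_eq_zero_left h, smul_neg, smul_smul, mul_comm, hst, neg_smul, one_smul,
      neg_neg]
  · rintro rfl
    rw [smul_smul, hst, neg_smul, one_smul, add_neg_cancel]

theorem add_smul_sub_smul_eq_zero_iff {K C : Type*} [CommRing K] [AddCommGroup C] [Module K C]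
    {s u : K} (hs : s * s = 1) (hu : u * u = 1) (g : K) {x y w : C} :
    x + (s * u) • y - (s * g) • w = 0 ↔ y = -u • (s • x - g • w) := by
  have hsu : s * u * -(s * u) = -1 := by linear_combination -u * u * hs - hu
  rw [add_sub_right_comm, add_smul_eq_zero_iff hsu]
  refine Eq.congr_right ?_
  match_scalars
  · ring
  · linear_combination u * g * hs

theorem eq_neg_coeff_self_smul_iff {C : Type*} [AddCommGroup C] [Module Kq C] {t N : ℕ} (a : Fin N)
    {s : Kq} (hs : s * s = 1) {x y : C} :
    y = -((superHecke t N).coeff a a * s) • x ↔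
      ((a : ℕ) < t → x + (s * qv⁻¹) • y = 0) ∧ (t ≤ (a : ℕ) → x - (s * qv) • y = 0) := by
  have hq : qv⁻¹ * qv = 1 := inv_mul_cancel₀ qv_ne_zero
  obtain ha | ha := lt_or_ge (a : ℕ) t
  · simp only [ha, ha.not_ge, true_imp_iff, false_imp_iff, and_true, superHecke_coeff_self_of_lt]
    symm
    refine add_smul_eq_zero_iff ?_
    linear_combination -s * s * hq - hs
  · simp only [ha, ha.not_gt, true_imp_iff, false_imp_iff, true_and, superHecke_coeff_self_of_le,
      sub_eq_add_neg, ← neg_smul]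
    symm
    refine add_smul_eq_zero_iff ?_
    linear_combination -s * s * hq - hs

/-- The generators of the quantum exterior algebra, arranged in columns. -/
def qcolumn (m n k l : ℕ) (c : Fin (k + l)) (a : Fin (m + n)) : QExt m n k l :=
  qmk m n k l (zgen m n k l (a, c))

/-- The factors in the exchange relations `z_d z_c = lam c d Ř (z_c z_d)` between the columns. -/
def columnFactor (k l : ℕ) (c d : Fin (k + l)) : Kq :=
  -(superHecke k (k + l)).coeff c d

theorem columnFactor_self_sq (k l t N : ℕ) (c : Fin (k + l)) :
    columnFactor k l c c ^ 2 + (superHecke t N).h * columnFactor k l c c = 1 := by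
  rw [columnFactor, superHecke_h, ← superHecke_h k (k + l)]
  linear_combination (superHecke k (k + l)).coeff_self_sq c

theorem columnFactor_mul_coeff_ne_one_iff {k l t N : ℕ} (c : Fin (k + l)) (a : Fin N) :
    columnFactor k l c c * (superHecke t N).coeff a a ≠ 1 ↔ (t ≤ (a : ℕ) ↔ k ≤ (c : ℕ)) := by
  have hq := qv_ne_zero
  have hq2 := qv_sq_ne_neg_one
  have hinv : -(qv * qv) ≠ 1 := fun h => hq2 (by linear_combination -h)
  have hinv' : -(qv⁻¹ * qv⁻¹) ≠ 1 := fun h => hq2 (by field_simp at h; linear_combination -h)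
  obtain ha | ha := lt_or_ge (a : ℕ) t <;> obtain hc | hc := lt_or_ge (c : ℕ) k
  all_goals simp [columnFactor, superHecke, ha, hc, not_le.mpr, hq, hinv, hinv']

section Relations

variable {m n k l : ℕ} {C : Type*} [Ring C] [Algebra Kq C] (z : Idx m n k l → C)

theorem exchanges_column_iff (c : Fin (k + l)) :
    (superHecke m (m + n)).Exchanges (columnFactor k l c c)
        (fun a => z (a, c)) (fun a => z (a, c)) ↔
      (∀ a : Fin (m + n), (m ≤ (a : ℕ) ↔ k ≤ (c : ℕ)) → z (a, c) * z (a, c) = 0) ∧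
      (∀ a b, a < b → (c : ℕ) < k →
        z (a, c) * z (b, c) + (sgn m a b * qv⁻¹) • (z (b, c) * z (a, c)) = 0) ∧
      ∀ a b, a < b → k ≤ (c : ℕ) →
        z (a, c) * z (b, c) - (sgn m a b * qv) • (z (b, c) * z (a, c)) = 0 := by
  have hcomm (a b : Fin (m + n)) (hab : a < b) :
      z (b, c) * z (a, c) = (columnFactor k l c c * (superHecke m (m + n)).coeff b a) •
          (z (a, c) * z (b, c)) ↔
        ((c : ℕ) < k → z (a, c) * z (b, c) + (sgn m a b * qv⁻¹) • (z (b, c) * z (a, c)) = 0) ∧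
        (k ≤ (c : ℕ) → z (a, c) * z (b, c) - (sgn m a b * qv) • (z (b, c) * z (a, c)) = 0) := by
    rw [columnFactor, superHecke_coeff_of_ne m hab.ne', sgn_comm m b a, neg_mul,
      eq_neg_coeff_self_smul_iff c (sgn_mul_self m a b)]
  simp +contextual only [exchanges_self_iff (columnFactor_self_sq k l m (m + n) c),
    columnFactor_mul_coeff_ne_one_iff, hcomm]
  grind

theorem exchanges_columns_iff {c d : Fin (k + l)} (hcd : c < d) :
    (superHecke m (m + n)).Exchanges (columnFactor k l c d)
        (fun a => z (a, c)) (fun a => z (a, d)) ↔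
      (∀ a : Fin (m + n), (a : ℕ) < m →
        z (a, c) * z (a, d) + (sgn k c d * qv⁻¹) • (z (a, d) * z (a, c)) = 0) ∧
      (∀ a b, a < b →
        z (a, c) * z (b, d) + (sgn m a b * sgn k c d) • (z (b, d) * z (a, c)) = 0) ∧
      (∀ a b, b < a → z (a, c) * z (b, d) + (sgn m a b * sgn k c d) • (z (b, d) * z (a, c)) -
        (sgn m a b * (qv⁻¹ - qv)) • (z (b, c) * z (a, d)) = 0) ∧
      ∀ a : Fin (m + n), m ≤ (a : ℕ) →
        z (a, c) * z (a, d) - (sgn k c d * qv) • (z (a, d) * z (a, c)) = 0 := by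
  have hself (a : Fin (m + n)) :
      z (a, d) * z (a, c) =
          (-sgn k c d * (superHecke m (m + n)).coeff a a) • (z (a, c) * z (a, d)) ↔
        ((a : ℕ) < m → z (a, c) * z (a, d) + (sgn k c d * qv⁻¹) • (z (a, d) * z (a, c)) = 0) ∧
        (m ≤ (a : ℕ) → z (a, c) * z (a, d) - (sgn k c d * qv) • (z (a, d) * z (a, c)) = 0) := by
    rw [neg_mul, mul_comm (sgn k c d), eq_neg_coeff_self_smul_iff a (sgn_mul_self k c d)]
  have hsign (a b : Fin (m + n)) :
      sgn m a b * sgn k c d * -(sgn k c d * sgn m a b) = -1 := by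
    linear_combination -sgn k c d * sgn k c d * sgn_mul_self m a b - sgn_mul_self k c d
  have hgt (a b : Fin (m + n)) (hab : a < b) :
      z (b, d) * z (a, c) =
          (-sgn k c d * (superHecke m (m + n)).coeff b a) • (z (a, c) * z (b, d)) ↔
        z (a, c) * z (b, d) + (sgn m a b * sgn k c d) • (z (b, d) * z (a, c)) = 0 := by
    rw [superHecke_coeff_of_ne m hab.ne', sgn_comm m b a, neg_mul, add_smul_eq_zero_iff (hsign a b)]
  have hlt (a b : Fin (m + n)) (hab : a < b) :
      z (a, d) * z (b, c) =
          -sgn k c d • ((superHecke m (m + n)).coeff a b • (z (b, c) * z (a, d)) +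
          (superHecke m (m + n)).h • (z (a, c) * z (b, d))) ↔
        z (b, c) * z (a, d) + (sgn m b a * sgn k c d) • (z (a, d) * z (b, c)) -
          (sgn m b a * (qv⁻¹ - qv)) • (z (a, c) * z (b, d)) = 0 := by
    rw [superHecke_coeff_of_ne m hab.ne, sgn_comm m b a,
      add_smul_sub_smul_eq_zero_iff (sgn_mul_self m a b) (sgn_mul_self k c d), superHecke_h,
      ← neg_sub, neg_smul _ (z (a, c) * z (b, d)), ← sub_eq_add_neg]
  rw [exchanges_iff, columnFactor, superHecke_coeff_of_ne k hcd.ne]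
  simp +contextual only [hself, hgt, hlt]
  grind

theorem lift_relSet_eq_zero_iff :
    (∀ r ∈ relSet m n k l, FreeAlgebra.lift Kq z r = 0) ↔
      (superHecke m (m + n)).ExchangeFamily (columnFactor k l)
        (fun c a => z (a, c)) := by
  simp +contextual only [exchangeFamily_iff, exchanges_column_iff, exchanges_columns_iff]
  constructor
  · intro h
    refine ⟨fun c => ⟨fun a hac => ?_, fun a b hab hc => ?_, fun a b hab hc => ?_⟩,
      fun c d hcd => ⟨fun a ha => ?_, fun a b hab => ?_, fun a b hab => ?_, fun a ha => ?_⟩⟩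
    · simpa [zgen] using h _ (.inl ⟨a, c, hac, rfl⟩)
    · simpa [zgen] using h _ (.inr (.inl ⟨a, b, c, hab, hc, rfl⟩))
    · simpa [zgen] using h _ (.inr (.inr (.inr (.inr (.inr (.inr ⟨a, b, c, hab, hc, rfl⟩))))))
    · simpa [zgen] using h _ (.inr (.inr (.inl ⟨a, c, d, ha, hcd, rfl⟩)))
    · simpa [zgen] using h _ (.inr (.inr (.inr (.inl ⟨a, b, c, d, hab, hcd, rfl⟩))))
    · simpa [zgen] using h _ (.inr (.inr (.inr (.inr (.inl ⟨a, b, c, d, hab, hcd, rfl⟩)))))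
    · simpa [zgen] using h _ (.inr (.inr (.inr (.inr (.inr (.inl ⟨a, c, d, ha, hcd, rfl⟩))))))
  · rintro ⟨hcol, hcols⟩ r (⟨a, c, hac, rfl⟩ | ⟨a, b, c, hab, hc, rfl⟩ | ⟨a, c, d, ha, hcd, rfl⟩ |
      ⟨a, b, c, d, hab, hcd, rfl⟩ | ⟨a, b, c, d, hab, hcd, rfl⟩ | ⟨a, c, d, ha, hcd, rfl⟩ |
      ⟨a, b, c, hab, hc, rfl⟩)
    all_goals simp only [zgen, map_add, map_sub, map_smul, map_mul, FreeAlgebra.lift_ι_apply]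
    exacts [(hcol c).1 a hac, (hcol c).2.1 a b hab hc, (hcols c d hcd).1 a ha,
      (hcols c d hcd).2.1 a b hab, (hcols c d hcd).2.2.1 a b hab, (hcols c d hcd).2.2.2 a ha,
      (hcol c).2.2 a b hab hc]

end Relations

variable (m n k l : ℕ)

theorem exchangeFamily_qcolumn :
    (superHecke m (m + n)).ExchangeFamily (columnFactor k l) (qcolumn m n k l) := by
  refine (lift_relSet_eq_zero_iff fun p => qmk m n k l (zgen m n k l p)).mp fun r hr => ?_
  have hlift : FreeAlgebra.lift Kq (fun p => qmk m n k l (zgen m n k l p)) = qmk m n k l :=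
    FreeAlgebra.hom_ext (FreeAlgebra.ι_comp_lift _)
  rw [hlift, ← map_zero (qmk m n k l)]
  exact RingQuot.mkAlgHom_rel Kq ⟨hr, rfl⟩

variable {m n k l} in
theorem exists_algHom_qcolumn {C : Type*} [Ring C] [Algebra Kq C]
    {z : Fin (k + l) → Fin (m + n) → C}
    (hz : (superHecke m (m + n)).ExchangeFamily (columnFactor k l) z) :
    ∃ φ : QExt m n k l →ₐ[Kq] C, ∀ c a, φ (qcolumn m n k l c a) = z c a := by
  let f := FreeAlgebra.lift Kq fun p : Idx m n k l => z p.2 p.1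
  have hf : ∀ ⦃x y⦄, qrel m n k l x y → f x = f y := by
    rintro x _ ⟨hx, rfl⟩
    rw [map_zero]
    exact (lift_relSet_eq_zero_iff _).mpr hz x hx
  refine ⟨RingQuot.liftAlgHom Kq ⟨f, hf⟩, fun c a => ?_⟩
  exact (RingQuot.liftAlgHom_mkAlgHom_apply ..).trans (FreeAlgebra.lift_ι_apply ..)

theorem linearIndependent_columnMonomial_qcolumn :
    LinearIndependent Kq fun e : ∀ (c : Fin (k + l)) (a : Fin (m + n)),
        Exponent (columnFactor k l c c * (superHecke m (m + n)).coeff a a ≠ 1) =>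
      columnMonomial (qcolumn m n k l) fun c a => e c a := by
  obtain ⟨M, _, _, z, v, hz, hind⟩ := exists_exchangeFamily_linearIndependent
    (superHecke m (m + n)) (columnFactor k l) (columnFactor_self_sq k l m (m + n))
  obtain ⟨φ, hφ⟩ := exists_algHom_qcolumn hz
  refine LinearIndependent.of_comp (LinearMap.applyₗ v ∘ₗ φ.toLinearMap) ?_
  convert hind with e
  change φ (columnMonomial _ _) v = _
  rw [map_columnMonomial]
  simp only [hφ]

theorem qdeg_eq_span_pow (N : ℕ) :
    qdeg m n k l N = span Kq (⋃ c, Set.range (qcolumn m n k l c)) ^ N := by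
  rw [span_pow, qdeg]
  congr 1
  ext x
  rw [Set.mem_ofPred_eq, Set.mem_pow]
  constructor
  · rintro ⟨f, rfl⟩
    exact ⟨fun i => ⟨_, Set.mem_iUnion.mpr ⟨(f i).2, (f i).1, rfl⟩⟩, rfl⟩
  · rintro ⟨f, rfl⟩
    choose c a hca using fun i => Set.mem_iUnion.mp (f i).2
    refine ⟨fun i => (a i, c i), ?_⟩
    simp only [qmonomial, ← hca]
    rfl

theorem card_even_pairs :
    Nat.card {x : Fin (k + l) × Fin (m + n) // m ≤ (x.2 : ℕ) ↔ k ≤ (x.1 : ℕ)} = m * k + n * l := by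
  have hlt (x : ℕ) (y : Fin x) : ¬x ≤ (y : ℕ) := y.isLt.not_ge
  rw [Nat.card_eq_fintype_card, Fintype.card_subtype, Finset.card_filter, Fintype.sum_prod_type]
  simp only [Fin.sum_univ_add, Fin.val_castAdd, Fin.val_natAdd]
  simp [hlt, mul_comm]

theorem card_odd_pairs :
    Nat.card {x : Fin (k + l) × Fin (m + n) // ¬(m ≤ (x.2 : ℕ) ↔ k ≤ (x.1 : ℕ))} =
      m * l + n * k := by
  have hlt (x : ℕ) (y : Fin x) : ¬x ≤ (y : ℕ) := y.isLt.not_ge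
  rw [Nat.card_eq_fintype_card, Fintype.card_subtype, Finset.card_filter, Fintype.sum_prod_type]
  simp only [Fin.sum_univ_add, Fin.val_castAdd, Fin.val_natAdd]
  simp [hlt, mul_comm, add_comm]

end QuantumExterior

/-- Flatness of `ℂ_q^{m|n} ⊗ ℂ_q^{k|l}` (Lemma 4.5 of the paper): the `K`-dimension of
`A_N` is `∑_{j=0}^{N} C(mk+nl, N−j)·C(ml+nk+j−1, j)`, the graded dimension of the
classical exterior superalgebra of `ℂ^{m|n} ⊗ ℂ^{k|l}` (with the `j = 0` term of the
second binomial coefficient equal to `1`, as given by truncated subtraction). -/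
theorem stmt12 (m n k l N : ℕ) (hmn : 1 ≤ m + n) (hkl : 1 ≤ k + l) :
    Module.rank Kq (qdeg m n k l N) =
      ((∑ j ∈ Finset.range (N + 1),
          Nat.choose (m * k + n * l) (N - j) * Nat.choose (m * l + n * k + j - 1) j : ℕ) :
        Cardinal) := by
  rw [qdeg_eq_span_pow, (exchangeFamily_qcolumn m n k l).rank_span_pow
    (columnFactor_self_sq k l m (m + n)) (linearIndependent_columnMonomial_qcolumn m n k l)]
  rw [mk_curried_exponents_eq_sum_choose]
  simp only [columnFactor_mul_coeff_ne_one_iff, card_even_pairs, card_odd_pairs,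
    Cardinal.lift_natCast]
end
end
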